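/- arXiv:math/0701228 — 2 statements merged into one kernel-verified Lean document; each statement's English description precedes it below -/
import Mathlib

section
/- Let a = (4/π)·𝒦(1/√2)² and c = a·(4(a−1)² − a²)/16. The function f(K) = (K−1)⁻³·[λ(K) − 1 − a(K−1) − (1/2)a(a−1)(K−1)²] is strictly increasing on (1, ∞); moreover f(K) → c as K → 1⁺ and f(K) → ∞ as K → ∞, so f maps (1, ∞) onto (c, ∞). -/
open Set Filter

/-- Complete elliptic integral of the first kind. -/
noncomputable def ellK (r : ℝ) : ℝ :=
  ∫ θ in (0:ℝ)..(Real.pi / 2), (1 - r ^ 2 * Real.sin θ ^ 2) ^ (-(1/2) : ℝ)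

/-- The Grötzsch modulus μ(r) = (π/2)·𝒦'(r)/𝒦(r). -/
noncomputable def mu (r : ℝ) : ℝ :=
  Real.pi / 2 * ellK (Real.sqrt (1 - r ^ 2)) / ellK r

section Helpers

open MeasureTheory Topology

/-- Integrand is continuous in `θ`. -/
lemma gen_cont {a b g : ℝ → ℝ} (ha : Continuous a) (hb : Continuous b) (hg : Continuous g)
    (hpos : ∀ u > 0, ∀ θ, 0 < a θ * u + b θ) (s : ℝ) {u : ℝ} (hu : 0 < u) :
    Continuous (fun θ => g θ * (a θ * u + b θ) ^ s) := by
  refine hg.mul (Continuous.rpow_const (by fun_prop) ?_)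
  intro θ
  exact Or.inl (hpos u hu θ).ne'

/-- Differentiation under the integral sign. -/
lemma gen_deriv {a b g : ℝ → ℝ} (ha : Continuous a) (hb : Continuous b) (hg : Continuous g)
    (hpos : ∀ u > 0, ∀ θ, 0 < a θ * u + b θ) (s : ℝ) {u : ℝ} (hu : 0 < u) :
    HasDerivAt (fun u => ∫ θ in (0:ℝ)..(Real.pi / 2), g θ * (a θ * u + b θ) ^ s)
      (∫ θ in (0:ℝ)..(Real.pi / 2), (g θ * a θ * s) * (a θ * u + b θ) ^ (s - 1)) u := by
  have hc2 : ContinuousOn (fun p : ℝ × ℝ => (g p.2 * a p.2 * s) * (a p.2 * p.1 + b p.2) ^ (s - 1))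
      (Icc (u/2) (2*u) ×ˢ Icc 0 (Real.pi/2)) := by
    refine ContinuousOn.mul (by fun_prop) (ContinuousOn.rpow_const (by fun_prop) ?_)
    rintro ⟨x, θ⟩ ⟨hx, -⟩
    exact Or.inl (hpos x (by linarith [hx.1]) θ).ne'
  obtain ⟨C, hC⟩ := (isCompact_Icc.prod isCompact_Icc).exists_bound_of_continuousOn hc2
  refine (intervalIntegral.hasDerivAt_integral_of_dominated_loc_of_deriv_le
    (F := fun u θ => g θ * (a θ * u + b θ) ^ s)
    (F' := fun u θ => (g θ * a θ * s) * (a θ * u + b θ) ^ (s - 1))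
    (bound := fun _ => C) (s := Ioo (u/2) (2*u)) (Ioo_mem_nhds (by linarith) (by linarith))
    ?_ ?_ ?_ ?_ ?_ ?_).2
  · filter_upwards [lt_mem_nhds hu] with x hx
    exact (gen_cont ha hb hg hpos s hx).aestronglyMeasurable
  · exact (gen_cont ha hb hg hpos s hu).intervalIntegrable _ _
  · exact (gen_cont ha hb (g := fun θ => g θ * a θ * s) (by fun_prop) hpos (s-1) hu).aestronglyMeasurable
  · refine Eventually.of_forall fun θ hθ x hx => ?_
    rw [uIoc_of_le (by positivity)] at hθ
    exact hC (x, θ) ⟨Ioo_subset_Icc_self hx, Ioc_subset_Icc_self hθ⟩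
  · exact intervalIntegrable_const
  · refine Eventually.of_forall fun θ _ x hx => ?_
    have hx0 : 0 < x := by linarith [hx.1]
    have h1 : HasDerivAt (fun x => a θ * x + b θ) (a θ) x := by
      simpa using ((hasDerivAt_id x).const_mul (a θ)).add_const (b θ)
    have h2 := (h1.rpow_const (p := s) (Or.inl (hpos x hx0 θ).ne')).const_mul (g θ)
    refine h2.congr_deriv ?_
    ring

/-- Shorthand for `cos² θ`. -/
noncomputable def cc (θ : ℝ) : ℝ := Real.cos θ ^ 2

lemma cc_cont : Continuous cc := by unfold cc; fun_prop
lemma cc_nonneg (θ : ℝ) : 0 ≤ cc θ := by unfold cc; positivity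
lemma cc_le (θ : ℝ) : cc θ ≤ 1 := by unfold cc; exact Real.cos_sq_le_one θ

/-- The general integral for the first family. -/
noncomputable def II (s u : ℝ) : ℝ := ∫ θ in (0:ℝ)..(Real.pi / 2), (u + cc θ) ^ s

/-- The general integral for the second family. -/
noncomputable def JJ (k : ℕ) (s u : ℝ) : ℝ :=
  ∫ θ in (0:ℝ)..(Real.pi / 2), cc θ ^ k * (1 + u * cc θ) ^ s

lemma II_int (s : ℝ) {u : ℝ} (hu : 0 < u) : Continuous (fun θ => (u + cc θ) ^ s) := by
  have hc := cc_cont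
  refine Continuous.rpow_const (by fun_prop) fun θ => Or.inl ?_
  have := cc_nonneg θ
  positivity

lemma JJ_int (k : ℕ) (s : ℝ) {u : ℝ} (hu : 0 < u) :
    Continuous (fun θ => cc θ ^ k * (1 + u * cc θ) ^ s) := by
  have hc := cc_cont
  refine Continuous.mul (by fun_prop) (Continuous.rpow_const (by fun_prop) fun θ => Or.inl ?_)
  have := cc_nonneg θ
  positivity

lemma II_deriv (s : ℝ) {u : ℝ} (hu : 0 < u) : HasDerivAt (II s) (s * II (s - 1) u) u := by
  have h := gen_deriv (a := fun _ => 1) (b := cc) (g := fun _ => 1) (by fun_prop) cc_cont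
    (by fun_prop) (fun u hu θ => by have := cc_nonneg θ; positivity) s hu
  unfold II
  rw [← intervalIntegral.integral_const_mul]
  simpa using h

lemma JJ_deriv (k : ℕ) (s : ℝ) {u : ℝ} (hu : 0 < u) :
    HasDerivAt (JJ k s) (s * JJ (k + 1) (s - 1) u) u := by
  have hc := cc_cont
  have h := gen_deriv (a := cc) (b := fun _ => 1) (g := fun θ => cc θ ^ k) cc_cont (by fun_prop)
    (by fun_prop) (fun u hu θ => by have := cc_nonneg θ; positivity) s hu
  unfold JJ
  rw [← intervalIntegral.integral_const_mul]
  convert h using 1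
  · ext u; congr 1; ext θ; congr 2; ring
  · congr 1; ext θ; rw [show cc θ * u + 1 = 1 + u * cc θ by ring]; ring

lemma cc_deriv (θ : ℝ) : HasDerivAt cc (-2 * (Real.sin θ * Real.cos θ)) θ := by
  unfold cc
  refine ((Real.hasDerivAt_cos θ).pow 2).congr_deriv ?_
  norm_num; ring

lemma sc_deriv (θ : ℝ) : HasDerivAt (fun θ => Real.sin θ * Real.cos θ) (2 * cc θ - 1) θ := by
  refine ((Real.hasDerivAt_sin θ).mul (Real.hasDerivAt_cos θ)).congr_deriv ?_
  have := Real.sin_sq_add_cos_sq θ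
  unfold cc; linarith

lemma sc_sq (θ : ℝ) : (Real.sin θ * Real.cos θ) ^ 2 = cc θ * (1 - cc θ) := by
  unfold cc
  rw [mul_pow, Real.sin_sq]; ring

lemma rpow_succ' {x : ℝ} (hx : 0 < x) (s : ℝ) : x ^ s = x * x ^ (s - 1) := by
  rw [Real.rpow_sub_one hx.ne']; field_simp

/-- ODE for the first family. -/
lemma II_ode {u : ℝ} (hu : 0 < u) :
    u * (1 + u) * (3 / 4 * II (-(1/2) - 1 - 1) u) + (1 + 2 * u) * (-(1/2) * II (-(1/2) - 1) u)
      + 1 / 4 * II (-(1/2)) u = 0 := by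
  have key : ∫ θ in (0:ℝ)..(Real.pi / 2),
      (u * (1 + u) * (3 / 4 * (u + cc θ) ^ (-(1/2) - 1 - 1 : ℝ))
       + (1 + 2 * u) * (-(1/2) * (u + cc θ) ^ (-(1/2) - 1 : ℝ))
       + 1 / 4 * (u + cc θ) ^ (-(1/2) : ℝ)) = 0 := by
    rw [intervalIntegral.integral_eq_sub_of_hasDerivAt
      (f := fun θ => (-1/4) * (Real.sin θ * Real.cos θ * (u + cc θ) ^ (-(1/2) - 1 : ℝ)))]
    · simp
    · intro θ _
      have hp : 0 < u + cc θ := by have := cc_nonneg θ; positivity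
      have h := ((sc_deriv θ).mul (((cc_deriv θ).const_add u).rpow_const
        (p := (-(1/2) - 1 : ℝ)) (Or.inl hp.ne'))).const_mul (-1/4)
      refine h.congr_deriv ?_
      rw [rpow_succ' hp (-(1/2)), rpow_succ' hp (-(1/2) - 1)]
      have := sc_sq θ
      set X := (u + cc θ) ^ (-(1/2) - 1 - 1 : ℝ)
      linear_combination (-3/4 * X) * this
    · refine Continuous.intervalIntegrable ?_ _ _
      have h1 := II_int (-(1/2)) hu
      have h2 := II_int (-(1/2) - 1) hu
      have h3 := II_int (-(1/2) - 1 - 1) hu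
      fun_prop
  have i1 := (II_int (-(1/2)) hu).intervalIntegrable (μ := volume) 0 (Real.pi/2)
  have i2 := (II_int (-(1/2) - 1) hu).intervalIntegrable (μ := volume) 0 (Real.pi/2)
  have i3 := (II_int (-(1/2) - 1 - 1) hu).intervalIntegrable (μ := volume) 0 (Real.pi/2)
  rw [intervalIntegral.integral_add (((i3.const_mul _).const_mul _).add ((i2.const_mul _).const_mul _))
    (i1.const_mul _), intervalIntegral.integral_add ((i3.const_mul _).const_mul _)
    ((i2.const_mul _).const_mul _)] at key
  simp only [intervalIntegral.integral_const_mul] at key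
  exact key

/-- ODE for the second family. -/
lemma JJ_ode {u : ℝ} (hu : 0 < u) :
    u * (1 + u) * (3 / 4 * JJ 2 (-(1/2) - 1 - 1) u) + (1 + 2 * u) * (-(1/2) * JJ 1 (-(1/2) - 1) u)
      + 1 / 4 * JJ 0 (-(1/2)) u = 0 := by
  have key : ∫ θ in (0:ℝ)..(Real.pi / 2),
      (u * (1 + u) * (3 / 4 * (cc θ ^ 2 * (1 + u * cc θ) ^ (-(1/2) - 1 - 1 : ℝ)))
       + (1 + 2 * u) * (-(1/2) * (cc θ ^ 1 * (1 + u * cc θ) ^ (-(1/2) - 1 : ℝ)))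
       + 1 / 4 * (cc θ ^ 0 * (1 + u * cc θ) ^ (-(1/2) : ℝ))) = 0 := by
    rw [intervalIntegral.integral_eq_sub_of_hasDerivAt
      (f := fun θ => (-1/4) * (Real.sin θ * Real.cos θ * (1 + u * cc θ) ^ (-(1/2) - 1 : ℝ)))]
    · simp
    · intro θ _
      have hp : 0 < 1 + u * cc θ := by have := cc_nonneg θ; positivity
      have h := ((sc_deriv θ).mul ((((cc_deriv θ).const_mul u).const_add 1).rpow_const
        (p := (-(1/2) - 1 : ℝ)) (Or.inl hp.ne'))).const_mul (-1/4)
      refine h.congr_deriv ?_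
      rw [rpow_succ' hp (-(1/2)), rpow_succ' hp (-(1/2) - 1)]
      have := sc_sq θ
      set X := (1 + u * cc θ) ^ (-(1/2) - 1 - 1 : ℝ)
      linear_combination (-3/4 * u * X) * this
    · refine Continuous.intervalIntegrable ?_ _ _
      have h1 := JJ_int 0 (-(1/2)) hu
      have h2 := JJ_int 1 (-(1/2) - 1) hu
      have h3 := JJ_int 2 (-(1/2) - 1 - 1) hu
      exact ((continuous_const.mul (continuous_const.mul h3)).add
        (continuous_const.mul (continuous_const.mul h2))).add (continuous_const.mul h1)
  have i1 := (JJ_int 0 (-(1/2)) hu).intervalIntegrable (μ := volume) 0 (Real.pi/2)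
  have i2 := (JJ_int 1 (-(1/2) - 1) hu).intervalIntegrable (μ := volume) 0 (Real.pi/2)
  have i3 := (JJ_int 2 (-(1/2) - 1 - 1) hu).intervalIntegrable (μ := volume) 0 (Real.pi/2)
  rw [intervalIntegral.integral_add (((i3.const_mul _).const_mul _).add ((i2.const_mul _).const_mul _))
    (i1.const_mul _), intervalIntegral.integral_add ((i3.const_mul _).const_mul _)
    ((i2.const_mul _).const_mul _)] at key
  simp only [intervalIntegral.integral_const_mul] at key
  exact key

noncomputable def I0 (u : ℝ) : ℝ := II (-(1/2)) u
noncomputable def I1 (u : ℝ) : ℝ := -(1/2) * II (-(1/2) - 1) u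
noncomputable def J0 (u : ℝ) : ℝ := JJ 0 (-(1/2)) u
noncomputable def J1 (u : ℝ) : ℝ := -(1/2) * JJ 1 (-(1/2) - 1) u

lemma I0_deriv {u : ℝ} (hu : 0 < u) : HasDerivAt I0 (I1 u) u := II_deriv _ hu
lemma J0_deriv {u : ℝ} (hu : 0 < u) : HasDerivAt J0 (J1 u) u := JJ_deriv 0 _ hu

lemma I1_deriv {u : ℝ} (hu : 0 < u) :
    HasDerivAt I1 (-((1 + 2 * u) * I1 u + I0 u / 4) / (u * (1 + u))) u := by
  refine ((II_deriv (-(1/2) - 1) hu).const_mul (-(1/2))).congr_deriv ?_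
  have := II_ode hu
  have h2 : u * (1 + u) ≠ 0 := by positivity
  unfold I1 I0
  rw [eq_div_iff h2]
  linear_combination this

lemma J1_deriv {u : ℝ} (hu : 0 < u) :
    HasDerivAt J1 (-((1 + 2 * u) * J1 u + J0 u / 4) / (u * (1 + u))) u := by
  refine ((JJ_deriv 1 (-(1/2) - 1) hu).const_mul (-(1/2))).congr_deriv ?_
  have := JJ_ode hu
  have h2 : u * (1 + u) ≠ 0 := by positivity
  unfold J1 J0
  rw [eq_div_iff h2]
  linear_combination this

/-- The Wronskian. -/
noncomputable def WW (u : ℝ) : ℝ := u * (1 + u) * (J1 u * I0 u - J0 u * I1 u)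

lemma WW_deriv {u : ℝ} (hu : 0 < u) : HasDerivAt WW 0 u := by
  have h1 : HasDerivAt (fun u : ℝ => u * (1 + u)) (1 * (1 + u) + u * 1) u :=
    (hasDerivAt_id u).mul ((hasDerivAt_id u).const_add 1)
  refine (h1.mul (((J1_deriv hu).mul (I0_deriv hu)).sub
    ((J0_deriv hu).mul (I1_deriv hu)))).congr_deriv ?_
  have h2 : u ≠ 0 := hu.ne'
  have h3 : 1 + u ≠ 0 := by positivity
  simp only [Pi.mul_apply, Pi.sub_apply]
  field_simp
  ring

lemma WW_const {u : ℝ} (hu : 0 < u) : WW u = WW 1 := by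
  refine IsOpen.is_const_of_deriv_eq_zero isOpen_Ioi isPreconnected_Ioi (s := Ioi (0:ℝ)) ?_ ?_ hu
    (by simp)
  · intro x hx
    exact (WW_deriv hx).differentiableAt.differentiableWithinAt
  · intro x hx
    exact (WW_deriv hx).deriv

lemma const_int (C : ℝ) : ∫ _ in (0:ℝ)..(Real.pi / 2), C = C * (Real.pi / 2) := by
  simp [mul_comm]

lemma pi2 : (0:ℝ) ≤ Real.pi / 2 := by positivity

lemma I0_le {u : ℝ} (hu : 0 < u) : I0 u ≤ u ^ (-(1/2) : ℝ) * (Real.pi / 2) := by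
  rw [← const_int]
  refine intervalIntegral.integral_mono_on pi2 ((II_int _ hu).intervalIntegrable _ _)
    intervalIntegrable_const fun θ _ => ?_
  exact Real.rpow_le_rpow_of_nonpos hu (by linarith [cc_nonneg θ]) (by norm_num)

lemma I0_ge {u : ℝ} (hu : 0 < u) : (1 + u) ^ (-(1/2) : ℝ) * (Real.pi / 2) ≤ I0 u := by
  rw [← const_int]
  refine intervalIntegral.integral_mono_on pi2 intervalIntegrable_const
    ((II_int _ hu).intervalIntegrable _ _) fun θ _ => ?_
  exact Real.rpow_le_rpow_of_nonpos (by linarith [cc_nonneg θ]) (by linarith [cc_le θ])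
    (by norm_num)

lemma I0_pos {u : ℝ} (hu : 0 < u) : 0 < I0 u := lt_of_lt_of_le (by positivity) (I0_ge hu)

lemma J0_le {u : ℝ} (hu : 0 < u) : J0 u ≤ Real.pi / 2 := by
  rw [← one_mul (Real.pi / 2), ← const_int]
  refine intervalIntegral.integral_mono_on pi2 ((JJ_int _ _ hu).intervalIntegrable _ _)
    intervalIntegrable_const fun θ _ => ?_
  rw [pow_zero, one_mul]
  have := cc_nonneg θ
  exact Real.rpow_le_one_of_one_le_of_nonpos (by nlinarith) (by norm_num)

lemma J0_ge {u : ℝ} (hu : 0 < u) : (1 + u) ^ (-(1/2) : ℝ) * (Real.pi / 2) ≤ J0 u := by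
  rw [← const_int]
  refine intervalIntegral.integral_mono_on pi2 intervalIntegrable_const
    ((JJ_int _ _ hu).intervalIntegrable _ _) fun θ _ => ?_
  rw [pow_zero, one_mul]
  have := cc_nonneg θ
  have := cc_le θ
  exact Real.rpow_le_rpow_of_nonpos (by positivity) (by nlinarith) (by norm_num)

lemma JJ1_nonneg {u : ℝ} (hu : 0 < u) : 0 ≤ JJ 1 (-(1/2) - 1) u := by
  refine intervalIntegral.integral_nonneg pi2 fun θ _ => ?_
  have := cc_nonneg θ
  positivity

lemma JJ1_le {u : ℝ} (hu : 0 < u) : JJ 1 (-(1/2) - 1) u ≤ Real.pi / 2 := by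
  rw [← one_mul (Real.pi / 2), ← const_int]
  refine intervalIntegral.integral_mono_on pi2 ((JJ_int _ _ hu).intervalIntegrable _ _)
    intervalIntegrable_const fun θ _ => ?_
  have h0 := cc_nonneg θ
  have h1 : (1 + u * cc θ) ^ (-(1/2) - 1 : ℝ) ≤ 1 :=
    Real.rpow_le_one_of_one_le_of_nonpos (by nlinarith) (by norm_num)
  have h2 : 0 ≤ (1 + u * cc θ) ^ (-(1/2) - 1 : ℝ) := by positivity
  rw [pow_one]
  nlinarith [cc_le θ]

lemma sin_int {u : ℝ} (hu : 0 < u) :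
    ∫ θ in (0:ℝ)..(Real.pi / 2), u * Real.sin θ * (u + cc θ) ^ (-(1/2) - 1 : ℝ)
      = (1 + u) ^ (-(1/2) : ℝ) := by
  rw [intervalIntegral.integral_eq_sub_of_hasDerivAt
      (f := fun θ => -Real.cos θ * (u + cc θ) ^ (-(1/2) : ℝ))]
  · simp [cc, add_comm]
  · intro θ _
    have hp : 0 < u + cc θ := by have := cc_nonneg θ; positivity
    refine ((Real.hasDerivAt_cos θ).neg.mul (((cc_deriv θ).const_add u).rpow_const
        (p := (-(1/2) : ℝ)) (Or.inl hp.ne'))).congr_deriv ?_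
    rw [rpow_succ' hp (-(1/2))]
    have : cc θ = Real.cos θ ^ 2 := rfl
    simp only [Pi.neg_apply]
    set X := (u + cc θ) ^ (-(1/2) - 1 : ℝ)
    rw [this]
    ring
  · refine Continuous.intervalIntegrable ?_ _ _
    have h2 := II_int (-(1/2) - 1) hu
    fun_prop

lemma uI_ge {u : ℝ} (hu : 0 < u) : (1 + u) ^ (-(1/2) : ℝ) ≤ u * II (-(1/2) - 1) u := by
  have h2 := II_int (-(1/2) - 1) hu
  rw [← sin_int hu, II, ← intervalIntegral.integral_const_mul]
  refine intervalIntegral.integral_mono_on pi2 (Continuous.intervalIntegrable (by fun_prop) _ _)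
    (Continuous.intervalIntegrable (by fun_prop) _ _) fun θ _ => ?_
  have := cc_nonneg θ
  have hX : 0 ≤ (u + cc θ) ^ (-(1/2) - 1 : ℝ) := by positivity
  have := Real.sin_le_one θ
  rw [mul_assoc]
  exact mul_le_mul_of_nonneg_left (by nlinarith) hu.le

lemma uI_le {u : ℝ} (hu : 0 < u) :
    u * II (-(1/2) - 1) u ≤ (1 + u) ^ (-(1/2) : ℝ) + u * I0 u := by
  have h2 := II_int (-(1/2) - 1) hu
  have h1 := II_int (-(1/2)) hu
  rw [← sin_int hu, II, I0, II, ← intervalIntegral.integral_const_mul,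
    ← intervalIntegral.integral_const_mul, ← intervalIntegral.integral_add
      (Continuous.intervalIntegrable (by fun_prop) _ _)
      (Continuous.intervalIntegrable (by fun_prop) _ _)]
  refine intervalIntegral.integral_mono_on pi2 (Continuous.intervalIntegrable (by fun_prop) _ _)
    (Continuous.intervalIntegrable (by fun_prop) _ _) fun θ hθ => ?_
  have h0 := cc_nonneg θ
  have hp : 0 < u + cc θ := by positivity
  rw [rpow_succ' hp (-(1/2))]
  have hX : 0 ≤ (u + cc θ) ^ (-(1/2) - 1 : ℝ) := by positivity
  have hs1 := Real.sin_le_one θ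
  have hs0 : 0 ≤ Real.sin θ := Real.sin_nonneg_of_nonneg_of_le_pi hθ.1 (by linarith [hθ.2, Real.pi_pos])
  have hc : cc θ = 1 - Real.sin θ ^ 2 := by unfold cc; rw [Real.cos_sq']
  have h4 : 1 ≤ Real.sin θ + (u + cc θ) := by rw [hc]; nlinarith
  calc u * (u + cc θ) ^ (-(1/2) - 1 : ℝ) ≤ u * ((Real.sin θ + (u + cc θ)) * (u + cc θ) ^ (-(1/2) - 1 : ℝ)) := by
        apply mul_le_mul_of_nonneg_left _ hu.le
        nlinarith
    _ = _ := by ring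

lemma uI0_lim : Tendsto (fun u => u * I0 u) (𝓝[>] 0) (𝓝 0) := by
  have h : Tendsto (fun u : ℝ => u ^ (1/2 : ℝ) * (Real.pi / 2)) (𝓝[>] 0) (𝓝 0) := by
    have : ContinuousAt (fun u : ℝ => u ^ (1/2 : ℝ) * (Real.pi / 2)) 0 :=
      (Real.continuousAt_rpow_const _ _ (Or.inr (by norm_num))).mul continuousAt_const
    have := this.tendsto
    simp only [one_div, ne_eq, inv_eq_zero, OfNat.ofNat_ne_zero, not_false_eq_true, Real.zero_rpow, zero_mul] at this
    simpa using this.mono_left nhdsWithin_le_nhds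
  refine tendsto_of_tendsto_of_tendsto_of_le_of_le' tendsto_const_nhds h ?_ ?_
  · filter_upwards [self_mem_nhdsWithin] with u hu
    have := I0_pos hu
    have : 0 < u := hu
    positivity
  · filter_upwards [self_mem_nhdsWithin] with u hu
    have hu : 0 < u := hu
    calc u * I0 u ≤ u * (u ^ (-(1/2) : ℝ) * (Real.pi / 2)) :=
          mul_le_mul_of_nonneg_left (I0_le hu) hu.le
      _ = u ^ (1/2 : ℝ) * (Real.pi / 2) := by
          rw [rpow_succ' hu (1/2), mul_assoc]; norm_num

lemma h_lim : Tendsto (fun u : ℝ => (1 + u) ^ (-(1/2) : ℝ)) (𝓝[>] 0) (𝓝 1) := by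
  have : ContinuousAt (fun u : ℝ => (1 + u) ^ (-(1/2) : ℝ)) 0 := by
    refine ContinuousAt.rpow_const (by fun_prop) (Or.inl (by norm_num))
  have := this.tendsto
  simp only [add_zero, Real.one_rpow] at this
  exact this.mono_left nhdsWithin_le_nhds

lemma J0_lim : Tendsto J0 (𝓝[>] 0) (𝓝 (Real.pi / 2)) := by
  have h := h_lim.mul_const (Real.pi / 2)
  rw [one_mul] at h
  refine tendsto_of_tendsto_of_tendsto_of_le_of_le' h tendsto_const_nhds ?_ ?_
  · filter_upwards [self_mem_nhdsWithin] with u hu using J0_ge hu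
  · filter_upwards [self_mem_nhdsWithin] with u hu using J0_le hu

lemma uII_lim : Tendsto (fun u => u * II (-(1/2) - 1) u) (𝓝[>] 0) (𝓝 1) := by
  have h := h_lim.add uI0_lim
  rw [add_zero] at h
  refine tendsto_of_tendsto_of_tendsto_of_le_of_le' h_lim h ?_ ?_
  · filter_upwards [self_mem_nhdsWithin] with u hu using uI_ge hu
  · filter_upwards [self_mem_nhdsWithin] with u hu using uI_le hu

lemma uJI_lim : Tendsto (fun u => JJ 1 (-(1/2) - 1) u * (u * I0 u)) (𝓝[>] 0) (𝓝 0) := by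
  have h := uI0_lim.const_mul (Real.pi / 2)
  rw [mul_zero] at h
  refine tendsto_of_tendsto_of_tendsto_of_le_of_le' tendsto_const_nhds h ?_ ?_
  · filter_upwards [self_mem_nhdsWithin] with u hu
    have hu : 0 < u := hu
    have := I0_pos hu
    have := JJ1_nonneg hu
    positivity
  · filter_upwards [self_mem_nhdsWithin] with u hu
    have hu : 0 < u := hu
    have := I0_pos hu
    exact mul_le_mul_of_nonneg_right (JJ1_le hu) (by positivity)

lemma WW_one : WW 1 = Real.pi / 4 := by
  have h1 : Tendsto (fun u : ℝ => 1 + u) (𝓝[>] 0) (𝓝 1) := by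
    have : ContinuousAt (fun u : ℝ => 1 + u) 0 := by fun_prop
    have := this.tendsto
    rw [add_zero] at this
    exact this.mono_left nhdsWithin_le_nhds
  have h := h1.mul (((uJI_lim.const_mul (-(1/2))).add ((J0_lim.mul uII_lim).mul_const (1/2))))
  have h2 : Tendsto (fun _ : ℝ => WW 1) (𝓝[>] (0:ℝ)) (𝓝 (WW 1)) := tendsto_const_nhds
  have h3 := tendsto_nhds_unique (h.congr' ?_) h2
  · rw [← h3]; ring
  · filter_upwards [self_mem_nhdsWithin] with u hu
    rw [← WW_const hu]
    unfold WW I1 J1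
    ring

lemma WW_eq {u : ℝ} (hu : 0 < u) : u * (1 + u) * (J1 u * I0 u - J0 u * I1 u) = Real.pi / 4 := by
  rw [← WW_one, ← WW_const hu, WW]

lemma J0_one : J0 1 = I0 1 := by
  unfold J0 I0 II JJ
  simp

lemma J1_add : J1 1 + I1 1 = -(1/2) * I0 1 := by
  have h2 := II_int (-(1/2) - 1) one_pos
  have hc := cc_cont
  have : JJ 1 (-(1/2) - 1) 1 + II (-(1/2) - 1) 1 = I0 1 := by
    unfold JJ I0 II
    rw [← intervalIntegral.integral_add
      ((JJ_int 1 (-(1/2) - 1) one_pos).intervalIntegrable _ _)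
      (Continuous.intervalIntegrable (by fun_prop) _ _)]
    congr 1
    ext θ
    have hp : 0 < 1 + cc θ := by have := cc_nonneg θ; positivity
    rw [rpow_succ' hp (-(1/2))]
    simp only [one_mul]
    ring
  unfold J1 I1
  linear_combination (-(1/2)) * this

/-- Lower bound on the derivative of the first integral. -/
lemma I1_ge {u : ℝ} (hu : 1 ≤ u) : -(u / 2 + 3 / 8) * I0 u ≤ u * (1 + u) * I1 u := by
  have hu0 : 0 < u := by linarith
  have h2 := II_int (-(1/2) - 1) hu0
  have h1 := II_int (-(1/2)) hu0
  have hc := cc_cont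
  -- average of `cos²`
  have hA : 1 / 4 * I0 u ≤ ∫ θ in (0:ℝ)..(Real.pi / 2), cc θ * (u + cc θ) ^ (-(1/2) : ℝ) := by
    have e1 : (1 + u) ^ (-(1/2) : ℝ) * (Real.pi / 4) ≤
        ∫ θ in (0:ℝ)..(Real.pi / 2), cc θ * (u + cc θ) ^ (-(1/2) : ℝ) := by
      have : ∫ θ in (0:ℝ)..(Real.pi / 2), cc θ = Real.pi / 4 := by
        unfold cc
        rw [integral_cos_sq]; simp; ring
      rw [← this, ← intervalIntegral.integral_const_mul]
      refine intervalIntegral.integral_mono_on pi2 (Continuous.intervalIntegrable (by fun_prop) _ _)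
        (Continuous.intervalIntegrable (by fun_prop) _ _) fun θ _ => ?_
      rw [mul_comm]
      refine mul_le_mul_of_nonneg_left ?_ (cc_nonneg θ)
      exact Real.rpow_le_rpow_of_nonpos (by linarith [cc_nonneg θ]) (by linarith [cc_le θ])
        (by norm_num)
    have e2 : u ^ (-(1/2) : ℝ) ≤ 2 * (1 + u) ^ (-(1/2) : ℝ) := by
      have : (4 * u) ^ (-(1/2) : ℝ) ≤ (1 + u) ^ (-(1/2) : ℝ) :=
        Real.rpow_le_rpow_of_nonpos (by linarith) (by linarith) (by norm_num)
      rw [Real.mul_rpow (by norm_num) hu0.le] at this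
      have h4 : (4:ℝ) ^ (-(1/2) : ℝ) = 1 / 2 := by
        rw [show (4:ℝ) = 2 ^ (2:ℝ) by norm_num, ← Real.rpow_mul (by norm_num)]
        norm_num [Real.rpow_neg_one]
      rw [h4] at this
      linarith
    have := I0_le hu0
    have := Real.pi_pos
    nlinarith
  have hB : u * (1 + u) * II (-(1/2) - 1) u ≤ (1 + u) * I0 u
      - ∫ θ in (0:ℝ)..(Real.pi / 2), cc θ * (u + cc θ) ^ (-(1/2) : ℝ) := by
    unfold I0 II
    rw [← intervalIntegral.integral_const_mul, ← intervalIntegral.integral_const_mul,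
      ← intervalIntegral.integral_sub (Continuous.intervalIntegrable (by fun_prop) _ _)
      (Continuous.intervalIntegrable (by fun_prop) _ _)]
    refine intervalIntegral.integral_mono_on pi2 (Continuous.intervalIntegrable (by fun_prop) _ _)
      (Continuous.intervalIntegrable (by fun_prop) _ _) fun θ _ => ?_
    have h0 := cc_nonneg θ
    have hp : 0 < u + cc θ := by positivity
    rw [rpow_succ' hp (-(1/2))]
    have hX : 0 ≤ (u + cc θ) ^ (-(1/2) - 1 : ℝ) := by positivity
    set X := (u + cc θ) ^ (-(1/2) - 1 : ℝ)
    have : 0 ≤ (cc θ * (1 - cc θ)) * X := mul_nonneg (mul_nonneg h0 (by linarith [cc_le θ])) hX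
    nlinarith
  unfold I1
  nlinarith

noncomputable def kap (u : ℝ) : ℝ := J0 u / I0 u
noncomputable def PP (u : ℝ) : ℝ := 4 / Real.pi * (u * (1 + u) * I0 u ^ 2)
noncomputable def vv (u : ℝ) : ℝ := (1 + 2 * u) / (2 * (u * (1 + u))) + I1 u / I0 u
noncomputable def QQ (u : ℝ) : ℝ := (u ^ 2 + u + 1) / (4 * (u * (1 + u)) ^ 2)

lemma m_deriv (u : ℝ) : HasDerivAt (fun u : ℝ => u * (1 + u)) (1 + 2 * u) u := by
  refine ((hasDerivAt_id u).mul ((hasDerivAt_id u).const_add 1)).congr_deriv ?_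
  simp; ring

lemma PP_pos {u : ℝ} (hu : 0 < u) : 0 < PP u := by
  have := I0_pos hu
  unfold PP; positivity

lemma kap_deriv {u : ℝ} (hu : 0 < u) : HasDerivAt kap (PP u)⁻¹ u := by
  have h0 := I0_pos hu
  refine ((J0_deriv hu).div (I0_deriv hu) h0.ne').congr_deriv ?_
  have hW := WW_eq hu
  have := Real.pi_pos
  unfold PP
  rw [div_eq_iff (by positivity)]
  field_simp
  linear_combination 4 * hW

lemma PP_deriv {u : ℝ} (hu : 0 < u) : HasDerivAt PP (2 * vv u * PP u) u := by
  have h0 := I0_pos hu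
  refine (((m_deriv u).mul ((I0_deriv hu).pow 2)).const_mul (4 / Real.pi)).congr_deriv ?_
  have := Real.pi_pos
  unfold PP vv
  simp only [Pi.pow_apply]
  field_simp
  norm_num
  ring

lemma vv_deriv {u : ℝ} (hu : 0 < u) : HasDerivAt vv (-QQ u - vv u ^ 2) u := by
  have h0 := I0_pos hu
  have h1 : HasDerivAt (fun u : ℝ => 1 + 2 * u) 2 u := by
    simpa using ((hasDerivAt_id u).const_mul 2).const_add 1
  refine ((h1.div ((m_deriv u).const_mul 2) (by positivity)).add
    ((I1_deriv hu).div (I0_deriv hu) h0.ne')).congr_deriv ?_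
  unfold vv QQ
  field_simp
  ring

lemma QQ_deriv {u : ℝ} (hu : 0 < u) :
    HasDerivAt QQ (-((2 * u + 1) * (u ^ 2 + u + 2)) / (4 * (u * (1 + u)) ^ 3)) u := by
  have h1 : HasDerivAt (fun u : ℝ => u ^ 2 + u + 1) (2 * u + 1) u := by
    simpa using (((hasDerivAt_id u).pow 2).add (hasDerivAt_id u)).add_const 1
  refine (h1.div (((m_deriv u).pow 2).const_mul 4) (by simp only [Pi.pow_apply]; positivity)).congr_deriv ?_
  simp only [Pi.pow_apply]
  field_simp
  norm_num
  ring

/-- The key positivity. -/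
lemma key_pos {u : ℝ} (hu : 1 ≤ u) :
    0 < 12 * vv u ^ 3 - 12 * QQ u * vv u
      + ((2 * u + 1) * (u ^ 2 + u + 2)) / (4 * (u * (1 + u)) ^ 3) := by
  have hu0 : 0 < u := by linarith
  have h0 := I0_pos hu0
  obtain ⟨s, hs⟩ : ∃ s, s = u * (1 + u) * vv u := ⟨_, rfl⟩
  have hv : vv u = s / (u * (1 + u)) := by rw [hs]; field_simp
  have hs1 : (4 * u + 1) / 8 ≤ s := by
    have h := I1_ge hu
    have : s = (1 + 2 * u) / 2 + (u * (1 + u) * I1 u) / I0 u := by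
      rw [hs]; unfold vv; field_simp
    have h3 : -(u / 2 + 3 / 8) ≤ (u * (1 + u) * I1 u) / I0 u := by
      rw [le_div_iff₀ h0]; exact h
    linarith
  have e : 12 * vv u ^ 3 - 12 * QQ u * vv u
      + ((2 * u + 1) * (u ^ 2 + u + 2)) / (4 * (u * (1 + u)) ^ 3)
      = (48 * s ^ 3 - 12 * (u ^ 2 + u + 1) * s + (2 * u + 1) * (u ^ 2 + u + 2))
        / (4 * (u * (1 + u)) ^ 3) := by
    rw [hv]; unfold QQ; field_simp; ring
  rw [e]
  apply div_pos _ (by positivity)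
  obtain ⟨d, hd⟩ : ∃ d, d = s - (4 * u + 1) / 8 := ⟨_, rfl⟩
  have hd0 : 0 ≤ d := by linarith
  obtain ⟨t, ht⟩ : ∃ t, t = u - 1 := ⟨_, rfl⟩
  have ht0 : 0 ≤ t := by linarith
  have hu' : u = t + 1 := by linarith
  have hs' : s = d + (4 * u + 1) / 8 := by linarith
  rw [hs', hu']
  ring_nf
  positivity

lemma kap_one : kap 1 = 1 := by
  unfold kap
  rw [J0_one, div_self (I0_pos one_pos).ne']

lemma kap_mono : StrictMonoOn kap (Ioi 0) := by
  apply strictMonoOn_of_deriv_pos (convex_Ioi 0)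
  · intro x hx
    exact (kap_deriv hx).continuousAt.continuousWithinAt
  · intro x hx
    rw [interior_Ioi] at hx
    rw [(kap_deriv hx).deriv]
    exact inv_pos.2 (PP_pos hx)

lemma rpow_sq {x : ℝ} (hx : 0 < x) : (x ^ (-(1/2) : ℝ)) ^ 2 = x⁻¹ := by
  rw [← Real.rpow_natCast, ← Real.rpow_mul hx.le]
  norm_num [Real.rpow_neg_one]

lemma PP_le {u : ℝ} (hu : 0 < u) : PP u ≤ Real.pi * (1 + u) := by
  have h0 := I0_pos hu
  have h : I0 u ^ 2 ≤ (u ^ (-(1/2) : ℝ) * (Real.pi / 2)) ^ 2 :=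
    pow_le_pow_left₀ h0.le (I0_le hu) 2
  rw [mul_pow, rpow_sq hu] at h
  have := Real.pi_pos
  unfold PP
  calc _ ≤ 4 / Real.pi * (u * (1 + u) * (u⁻¹ * (Real.pi / 2) ^ 2)) := by gcongr
    _ = _ := by field_simp; norm_num

lemma PP_ge {u : ℝ} (hu : 0 < u) : Real.pi * u ≤ PP u := by
  have h : ((1 + u) ^ (-(1/2) : ℝ) * (Real.pi / 2)) ^ 2 ≤ I0 u ^ 2 :=
    pow_le_pow_left₀ (by positivity) (I0_ge hu) 2
  rw [mul_pow, rpow_sq (by positivity)] at h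
  have := Real.pi_pos
  unfold PP
  calc _ = 4 / Real.pi * (u * (1 + u) * ((1 + u)⁻¹ * (Real.pi / 2) ^ 2)) := by
        field_simp; norm_num
    _ ≤ _ := by gcongr

lemma kap_ge {u : ℝ} (hu : 1 ≤ u) :
    1 + Real.pi⁻¹ * (Real.log (1 + u) - Real.log 2) ≤ kap u := by
  have hd : ∀ x > (0:ℝ), HasDerivAt (fun u => kap u - Real.pi⁻¹ * Real.log (1 + u))
      ((PP x)⁻¹ - Real.pi⁻¹ * (1 / (1 + x))) x := by
    intro x hx
    refine (kap_deriv hx).sub (HasDerivAt.const_mul _ ?_)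
    exact HasDerivAt.log ((hasDerivAt_id x).const_add 1) (by simp; positivity)
  have hm : MonotoneOn (fun u => kap u - Real.pi⁻¹ * Real.log (1 + u)) (Ioi 0) := by
    apply monotoneOn_of_deriv_nonneg (convex_Ioi 0)
    · intro x hx
      exact (hd x hx).continuousAt.continuousWithinAt
    · intro x hx
      rw [interior_Ioi] at hx
      exact (hd x hx).differentiableAt.differentiableWithinAt
    · intro x hx
      rw [interior_Ioi] at hx
      rw [(hd x hx).deriv]
      have h := inv_anti₀ (PP_pos hx) (PP_le hx)
      rw [mul_inv] at h
      rw [one_div]; linarith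
  have := hm (show (1:ℝ) ∈ Ioi 0 by simp) (show u ∈ Ioi (0:ℝ) by simp; linarith) hu
  simp only [kap_one] at this
  rw [show (1:ℝ) + 1 = 2 by norm_num] at this
  linarith

lemma kap_top : Tendsto kap atTop atTop := by
  have h : Tendsto (fun u : ℝ => 1 + Real.pi⁻¹ * (Real.log (1 + u) - Real.log 2)) atTop atTop := by
    apply tendsto_atTop_add_const_left
    apply Tendsto.const_mul_atTop (by positivity)
    simp only [sub_eq_add_neg]
    apply tendsto_atTop_add_const_right
    exact Real.tendsto_log_atTop.comp (tendsto_atTop_add_const_left _ _ tendsto_id)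
  refine tendsto_atTop_mono' _ ?_ h
  filter_upwards [eventually_ge_atTop 1] with u hu using kap_ge hu

lemma ellK_I {u : ℝ} (hu : 0 < u) {r : ℝ} (hr : r ^ 2 = 1 / (1 + u)) :
    ellK r = (1 + u) ^ (1/2 : ℝ) * I0 u := by
  unfold ellK I0 II
  rw [← intervalIntegral.integral_const_mul]
  congr 1; ext θ
  have h0 := cc_nonneg θ
  have e : 1 - r ^ 2 * Real.sin θ ^ 2 = (1 + u)⁻¹ * (u + cc θ) := by
    rw [hr, Real.sin_sq]; unfold cc; field_simp; ring
  rw [e, Real.mul_rpow (by positivity) (by positivity), Real.inv_rpow (by positivity),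
    Real.rpow_neg (by positivity), inv_inv]

lemma ellK_J {u : ℝ} (hu : 0 < u) {r : ℝ} (hr : r ^ 2 = u / (1 + u)) :
    ellK r = (1 + u) ^ (1/2 : ℝ) * J0 u := by
  unfold ellK J0 JJ
  rw [← intervalIntegral.integral_const_mul]
  congr 1; ext θ
  have h0 := cc_nonneg θ
  have e : 1 - r ^ 2 * Real.sin θ ^ 2 = (1 + u)⁻¹ * (1 + u * cc θ) := by
    rw [hr, Real.sin_sq]; unfold cc; field_simp; ring
  rw [e, Real.mul_rpow (by positivity) (by positivity), Real.inv_rpow (by positivity),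
    Real.rpow_neg (by positivity), inv_inv, pow_zero, one_mul]

lemma kap_pos {u : ℝ} (hu : 0 < u) : 0 < kap u := by
  have h1 := I0_pos hu
  have h2 : 0 < J0 u := lt_of_lt_of_le (by positivity) (J0_ge hu)
  unfold kap; positivity

lemma lam_kap {lam : ℝ → ℝ}
    (hlam : ∀ K : ℝ, 0 < K → ∀ r ∈ Set.Ioo (0:ℝ) 1,
      mu r = Real.pi / (2 * K) → lam K = r ^ 2 / (1 - r ^ 2)) {u : ℝ} (hu : 0 < u) :
    lam (kap u) = u := by
  have h1 := I0_pos hu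
  have h2 : 0 < J0 u := lt_of_lt_of_le (by positivity) (J0_ge hu)
  have hr : (Real.sqrt (u / (1 + u))) ^ 2 = u / (1 + u) := Real.sq_sqrt (by positivity)
  have hlt : u / (1 + u) < 1 := by rw [div_lt_one (by positivity)]; linarith
  have e : 1 - u / (1 + u) = 1 / (1 + u) := by field_simp; ring
  rw [hlam (kap u) (kap_pos hu) (Real.sqrt (u / (1 + u))) ⟨by positivity, ?_⟩ ?_, hr, e]
  · field_simp
  · rw [Real.sqrt_lt' one_pos]; simpa using hlt
  · unfold mu
    rw [ellK_J hu hr, ellK_I hu (r := Real.sqrt (1 - Real.sqrt (u / (1 + u)) ^ 2))]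
    · unfold kap
      field_simp
    · rw [hr, e, Real.sq_sqrt (by positivity)]

lemma a_eq : 4 / Real.pi * ellK (1 / Real.sqrt 2) ^ 2 = PP 1 := by
  rw [ellK_I one_pos (r := 1 / Real.sqrt 2) (by rw [div_pow]; norm_num)]
  unfold PP
  have : (((1:ℝ) + 1) ^ (1/2 : ℝ)) ^ 2 = 2 := by
    rw [← Real.rpow_natCast, ← Real.rpow_mul (by norm_num)]
    norm_num
  rw [mul_pow, this]; norm_num

lemma vv_one : 2 * vv 1 * PP 1 = PP 1 - 1 := by
  have h := WW_eq one_pos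
  have h1 := J1_add
  rw [J0_one] at h
  have h0 := I0_pos one_pos
  have := Real.pi_pos
  unfold vv PP
  have hJ : J1 1 = -(1/2) * I0 1 - I1 1 := by linarith
  rw [hJ] at h
  field_simp
  linear_combination (-4) * h

lemma pos_of_deriv_pos {g g' : ℝ → ℝ} (hg : ∀ x, 1 ≤ x → HasDerivAt g (g' x) x)
    (h1 : g 1 = 0) (hp : ∀ x, 1 < x → 0 < g' x) : ∀ x, 1 < x → 0 < g x := by
  intro x hx
  have hm : StrictMonoOn g (Ici 1) := by
    apply strictMonoOn_of_deriv_pos (convex_Ici 1)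
    · intro y hy
      exact (hg y hy).continuousAt.continuousWithinAt
    · intro y hy
      rw [interior_Ici] at hy
      rw [(hg y hy.le).deriv]
      exact hp y hy
  have := hm (by simp) hx.le hx
  rwa [h1] at this

lemma taylor_mono {L L1 L2 L3 L4 : ℝ → ℝ}
    (d0 : ∀ x, 1 ≤ x → HasDerivAt L (L1 x) x) (d1 : ∀ x, 1 ≤ x → HasDerivAt L1 (L2 x) x)
    (d2 : ∀ x, 1 ≤ x → HasDerivAt L2 (L3 x) x) (d3 : ∀ x, 1 ≤ x → HasDerivAt L3 (L4 x) x)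
    (hp : ∀ x, 1 < x → 0 < L4 x) :
    StrictMonoOn (fun x => (L x - L 1 - L1 1 * (x - 1) - 1 / 2 * L2 1 * (x - 1) ^ 2) / (x - 1) ^ 3)
      (Ioi 1) ∧
    ContinuousOn (fun x => (L x - L 1 - L1 1 * (x - 1) - 1 / 2 * L2 1 * (x - 1) ^ 2) / (x - 1) ^ 3)
      (Ioi 1) ∧
    Tendsto (fun x => (L x - L 1 - L1 1 * (x - 1) - 1 / 2 * L2 1 * (x - 1) ^ 2) / (x - 1) ^ 3)
      (𝓝[>] 1) (𝓝 (L3 1 / 6)) := by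
  have hx1 : ∀ x : ℝ, HasDerivAt (fun x : ℝ => x - 1) 1 x := fun x => (hasDerivAt_id x).sub_const 1
  have e0 : ∀ x, 1 ≤ x → HasDerivAt
      (fun x => L x - L 1 - L1 1 * (x - 1) - 1 / 2 * L2 1 * (x - 1) ^ 2)
      (L1 x - L1 1 - L2 1 * (x - 1)) x := fun x hx => by
    refine ((((d0 x hx).sub_const _).sub ((hx1 x).const_mul _)).sub
      (((hx1 x).pow 2).const_mul _)).congr_deriv ?_
    norm_num
    ring
  have e1 : ∀ x, 1 ≤ x → HasDerivAt (fun x => L1 x - L1 1 - L2 1 * (x - 1)) (L2 x - L2 1) x :=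
    fun x hx => by
      refine (((d1 x hx).sub_const _).sub ((hx1 x).const_mul _)).congr_deriv ?_
      norm_num
  have e2 : ∀ x, 1 ≤ x → HasDerivAt (fun x => L2 x - L2 1) (L3 x) x :=
    fun x hx => (d2 x hx).sub_const _
  have p2 : ∀ x, 1 < x → 0 < (x - 1) * L3 x - (L2 x - L2 1) := by
    apply pos_of_deriv_pos (g' := fun x => (x - 1) * L4 x)
    · intro x hx
      refine (((hx1 x).mul (d3 x hx)).sub (e2 x hx)).congr_deriv ?_
      ring
    · simp
    · intro x hx
      exact mul_pos (by linarith) (hp x hx)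
  have p1 : ∀ x, 1 < x → 0 < (x - 1) * (L2 x - L2 1) - 2 * (L1 x - L1 1 - L2 1 * (x - 1)) := by
    apply pos_of_deriv_pos (g' := fun x => (x - 1) * L3 x - (L2 x - L2 1))
    · intro x hx
      refine (((hx1 x).mul (e2 x hx)).sub ((e1 x hx).const_mul 2)).congr_deriv ?_
      ring
    · simp
    · exact p2
  have p0 : ∀ x, 1 < x → 0 < (x - 1) * (L1 x - L1 1 - L2 1 * (x - 1))
      - 3 * (L x - L 1 - L1 1 * (x - 1) - 1 / 2 * L2 1 * (x - 1) ^ 2) := by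
    apply pos_of_deriv_pos (g' := fun x => (x - 1) * (L2 x - L2 1) - 2 * (L1 x - L1 1 - L2 1 * (x - 1)))
    · intro x hx
      refine (((hx1 x).mul (e1 x hx)).sub ((e0 x hx).const_mul 3)).congr_deriv ?_
      ring
    · simp
    · exact p1
  have ef : ∀ x, 1 < x → HasDerivAt
      (fun x => (L x - L 1 - L1 1 * (x - 1) - 1 / 2 * L2 1 * (x - 1) ^ 2) / (x - 1) ^ 3)
      (((x - 1) * (L1 x - L1 1 - L2 1 * (x - 1))
      - 3 * (L x - L 1 - L1 1 * (x - 1) - 1 / 2 * L2 1 * (x - 1) ^ 2)) / (x - 1) ^ 4) x := by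
    intro x hx
    have hx0 : 0 < x - 1 := by linarith
    refine ((e0 x hx.le).div ((hx1 x).pow 3) (by simp only [Pi.pow_apply]; positivity)).congr_deriv ?_
    simp only [Pi.pow_apply]
    rw [div_eq_div_iff (by positivity) (by positivity)]
    push_cast
    ring
  have hcont : ContinuousOn
      (fun x => (L x - L 1 - L1 1 * (x - 1) - 1 / 2 * L2 1 * (x - 1) ^ 2) / (x - 1) ^ 3)
      (Ioi 1) := fun x hx => (ef x hx).continuousAt.continuousWithinAt
  have hev : ∀ {p : ℝ → Prop}, (∀ x, 1 < x → p x) → ∀ᶠ x in 𝓝[>] (1:ℝ), p x := by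
    intro p h
    filter_upwards [self_mem_nhdsWithin] with x hx using h x hx
  have hz : ∀ {g : ℝ → ℝ}, ContinuousAt g 1 → g 1 = 0 → Tendsto g (𝓝[>] 1) (𝓝 0) := by
    intro g hg h1
    have := hg.tendsto
    rw [h1] at this
    exact this.mono_left nhdsWithin_le_nhds
  refine ⟨?_, hcont, ?_⟩
  · apply strictMonoOn_of_deriv_pos (convex_Ioi 1) hcont
    intro x hx
    rw [interior_Ioi] at hx
    rw [(ef x hx).deriv]
    have hx0 : 0 < x - 1 := by have : 1 < x := hx; linarith
    exact div_pos (p0 x hx) (by positivity)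
  · refine HasDerivAt.lhopital_zero_nhdsGT (f' := fun x => L1 x - L1 1 - L2 1 * (x - 1))
      (g' := fun x => 3 * (x - 1) ^ 2) (hev fun x hx => e0 x hx.le)
      (hev fun x hx => ?_) (hev fun x hx => ?_) (hz (e0 1 le_rfl).continuousAt (by simp))
      (hz (by fun_prop) (by simp)) ?_
    · refine ((hx1 x).pow 3).congr_deriv ?_
      norm_num
    · have hx0 : 0 < x - 1 := by linarith
      positivity
    refine HasDerivAt.lhopital_zero_nhdsGT (f' := fun x => L2 x - L2 1)
      (g' := fun x => 6 * (x - 1)) (hev fun x hx => e1 x hx.le)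
      (hev fun x hx => ?_) (hev fun x hx => ?_) (hz (e1 1 le_rfl).continuousAt (by simp))
      (hz (by fun_prop) (by simp)) ?_
    · refine (((hx1 x).pow 2).const_mul 3).congr_deriv ?_
      norm_num; ring
    · have hx0 : 0 < x - 1 := by linarith
      positivity
    refine HasDerivAt.lhopital_zero_nhdsGT (f' := L3)
      (g' := fun x => 6) (hev fun x hx => e2 x hx.le)
      (hev fun x hx => ?_) (hev fun x hx => ?_) (hz (e2 1 le_rfl).continuousAt (by simp))
      (hz (by fun_prop) (by simp)) ?_
    · refine ((hx1 x).const_mul 6).congr_deriv ?_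
      norm_num
    · norm_num
    · exact ((d3 1 le_rfl).continuousAt.tendsto.div_const 6).mono_left nhdsWithin_le_nhds

lemma kap_half_lt : kap (1/2) < 1 := by
  calc kap (1/2) < kap 1 := kap_mono (by simp) (by simp) (by norm_num)
    _ = 1 := kap_one

lemma kap_surj {K : ℝ} (hK : kap (1/2) < K) : ∃ u, 1 / 2 < u ∧ kap u = K := by
  obtain ⟨M, hM1, hM2⟩ := ((kap_top.eventually_gt_atTop K).and (eventually_gt_atTop (1/2))).exists
  have hc : ContinuousOn kap (Icc (1/2) M) := fun x hx =>
    (kap_deriv (by linarith [hx.1])).continuousAt.continuousWithinAt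
  obtain ⟨u, hu, rfl⟩ := intermediate_value_Ioo hM2.le hc ⟨hK, hM1⟩
  exact ⟨u, hu.1, rfl⟩

section

lemma lam_spec {lam : ℝ → ℝ} (hl : ∀ u, 0 < u → lam (kap u) = u) {K : ℝ} (hK : kap (1/2) < K) : 1 / 2 < lam K ∧ kap (lam K) = K := by
  obtain ⟨u, hu, rfl⟩ := kap_surj hK
  rw [hl u (by linarith)]
  exact ⟨hu, rfl⟩

lemma lam_deriv {lam : ℝ → ℝ} (hl : ∀ u, 0 < u → lam (kap u) = u) {K : ℝ} (hK : kap (1/2) < K) : HasDerivAt lam (PP (lam K)) K := by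
  have hmono : MonotoneOn lam (Ioi (kap (1/2))) := by
    intro x hx y hy hxy
    have h1 := lam_spec hl hx
    have h2 := lam_spec hl hy
    rw [← h1.2, ← h2.2] at hxy
    exact (kap_mono.le_iff_le (by simp; linarith [h1.1]) (by simp; linarith [h2.1])).1 hxy
  have hs := lam_spec hl hK
  have hcont : ContinuousAt lam K := by
    refine continuousAt_of_monotoneOn_of_image_mem_nhds hmono (Ioi_mem_nhds hK) ?_
    refine mem_of_superset (Ioi_mem_nhds hs.1) ?_
    intro u hu
    have hu : 1 / 2 < u := hu
    refine ⟨kap u, kap_mono (by simp) (by simp; linarith) hu, hl u (by linarith)⟩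
  have hpos : 0 < lam K := by linarith [hs.1]
  have h := HasDerivAt.of_local_left_inverse hcont (kap_deriv hpos) (inv_pos.2 (PP_pos hpos)).ne' (by
    filter_upwards [Ioi_mem_nhds hK] with y hy using (lam_spec hl hy).2)
  rwa [inv_inv] at h

lemma lam_ge {lam : ℝ → ℝ} (hl : ∀ u, 0 < u → lam (kap u) = u) {K : ℝ} (hK : 1 ≤ K) : Real.exp (Real.pi * (K - 1)) ≤ lam K := by
  have hb := kap_half_lt
  have hd : ∀ x, 1 ≤ x → HasDerivAt (fun x => lam x * Real.exp (-Real.pi * (x - 1)))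
      ((PP (lam x) - Real.pi * lam x) * Real.exp (-Real.pi * (x - 1))) x := by
    intro x hx
    have h2 : HasDerivAt (fun x => -Real.pi * (x - 1)) (-Real.pi * 1) x :=
      ((hasDerivAt_id x).sub_const 1).const_mul _
    refine ((lam_deriv hl (by linarith)).mul h2.exp).congr_deriv ?_
    ring
  have hm : MonotoneOn (fun x => lam x * Real.exp (-Real.pi * (x - 1))) (Ici 1) := by
    apply monotoneOn_of_deriv_nonneg (convex_Ici 1)
    · intro x hx
      exact (hd x hx).continuousAt.continuousWithinAt
    · intro x hx
      rw [interior_Ici] at hx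
      exact (hd x hx.le).differentiableAt.differentiableWithinAt
    · intro x hx
      rw [interior_Ici] at hx
      rw [(hd x hx.le).deriv]
      have hx' : 1 < x := hx
      have := PP_ge (show 0 < lam x by linarith [(lam_spec hl (K := x) (by linarith)).1])
      exact mul_nonneg (by linarith) (Real.exp_pos _).le
  have := hm (by simp) hK hK
  have h1 : lam 1 = 1 := by have := hl 1 one_pos; rwa [kap_one] at this
  simp only [h1, sub_self, mul_zero, Real.exp_zero, mul_one] at this
  rw [neg_mul, Real.exp_neg, ← div_eq_mul_inv, le_div_iff₀ (Real.exp_pos _), one_mul] at this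
  exact this

lemma lam_main {lam : ℝ → ℝ} (hl : ∀ u, 0 < u → lam (kap u) = u) :
    let a := PP 1
    let c := a * (4 * (a - 1) ^ 2 - a ^ 2) / 16
    let f := fun K : ℝ =>
      (lam K - 1 - a * (K - 1) - 1 / 2 * a * (a - 1) * (K - 1) ^ 2) / (K - 1) ^ 3
    StrictMonoOn f (Set.Ioi 1) ∧ ContinuousOn f (Set.Ioi 1) ∧ Tendsto f (𝓝[>] 1) (𝓝 c) := by
  intro a c f
  have h1 : lam 1 = 1 := by have := hl 1 one_pos; rwa [kap_one] at this
  have hb := kap_half_lt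
  have hP1 := PP_pos one_pos
  have d0 : ∀ x, 1 ≤ x → HasDerivAt lam (PP (lam x)) x := fun x hx => lam_deriv hl (by linarith)
  have hpos : ∀ x, 1 ≤ x → 0 < lam x := fun x hx => by
    linarith [(lam_spec hl (K := x) (by linarith)).1]
  have dP : ∀ x, 1 ≤ x → HasDerivAt (fun x => PP (lam x)) (2 * vv (lam x) * PP (lam x) * PP (lam x)) x :=
    fun x hx => (PP_deriv (hpos x hx)).comp x (d0 x hx)
  have dv : ∀ x, 1 ≤ x → HasDerivAt (fun x => vv (lam x))
      ((-QQ (lam x) - vv (lam x) ^ 2) * PP (lam x)) x :=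
    fun x hx => (vv_deriv (hpos x hx)).comp x (d0 x hx)
  have dQ : ∀ x, 1 ≤ x → HasDerivAt (fun x => QQ (lam x))
      (-((2 * lam x + 1) * (lam x ^ 2 + lam x + 2)) / (4 * (lam x * (1 + lam x)) ^ 3) * PP (lam x)) x :=
    fun x hx => (QQ_deriv (hpos x hx)).comp x (d0 x hx)
  have T := taylor_mono (L := lam) (L1 := fun x => PP (lam x))
    (L2 := fun x => 2 * vv (lam x) * PP (lam x) ^ 2)
    (L3 := fun x => PP (lam x) ^ 3 * (6 * vv (lam x) ^ 2 - 2 * QQ (lam x)))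
    (L4 := fun x => 2 * PP (lam x) ^ 4 * (12 * vv (lam x) ^ 3 - 12 * QQ (lam x) * vv (lam x)
      + ((2 * lam x + 1) * (lam x ^ 2 + lam x + 2)) / (4 * (lam x * (1 + lam x)) ^ 3)))
    d0 (fun x hx => (dP x hx).congr_deriv (by ring))
    (fun x hx => by
      refine (((dv x hx).const_mul 2).mul ((dP x hx).pow 2)).congr_deriv ?_
      simp only [Pi.pow_apply]
      push_cast
      ring)
    (fun x hx => by
      refine (((dP x hx).pow 3).mul ((((dv x hx).pow 2).const_mul 6).sub
        ((dQ x hx).const_mul 2))).congr_deriv ?_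
      simp only [Pi.pow_apply, Pi.sub_apply]
      push_cast
      ring)
    (fun x hx => by
      have h := lam_ge hl hx.le
      have h2 : (1:ℝ) ≤ Real.exp (Real.pi * (x - 1)) :=
        Real.one_le_exp (mul_nonneg Real.pi_pos.le (by linarith))
      exact mul_pos (by have := PP_pos (hpos x hx.le); positivity) (key_pos (by linarith)))
  simp only [h1] at T
  have hv := vv_one
  have hv' : vv 1 = (PP 1 - 1) / (2 * PP 1) := by rw [eq_div_iff (by positivity)]; linarith
  have hQ : QQ 1 = 3 / 16 := by unfold QQ; norm_num
  have e2 : 2 * vv 1 * PP 1 ^ 2 = a * (a - 1) := by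
    calc _ = (2 * vv 1 * PP 1) * PP 1 := by ring
      _ = _ := by rw [hv]; ring
  have e3 : PP 1 ^ 3 * (6 * vv 1 ^ 2 - 2 * QQ 1) / 6 = c := by
    rw [hv', hQ]; simp only [c, a]; field_simp; ring
  rw [e2, e3] at T
  have ef : f = (fun x => (lam x - 1 - PP 1 * (x - 1) - 1 / 2 * (a * (a - 1)) * (x - 1) ^ 2) / (x - 1) ^ 3) := by
    ext x; simp only [f, a]; ring
  rw [ef]
  exact T

lemma lam_top {lam : ℝ → ℝ} (hl : ∀ u, 0 < u → lam (kap u) = u) (a : ℝ) : Tendsto (fun K : ℝ =>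
      (lam K - 1 - a * (K - 1) - 1 / 2 * a * (a - 1) * (K - 1) ^ 2) / (K - 1) ^ 3) atTop atTop := by
  have h : Tendsto (fun K : ℝ => 1 / 24 * (K - 1) - (1 + |a| + |1 / 2 * a * (a - 1)|)) atTop atTop := by
    simp only [sub_eq_add_neg]
    apply tendsto_atTop_add_const_right
    apply Tendsto.const_mul_atTop (by norm_num)
    exact tendsto_atTop_add_const_right _ _ tendsto_id
  refine tendsto_atTop_mono' _ ?_ h
  filter_upwards [eventually_ge_atTop 2] with K hK
  obtain ⟨t, ht⟩ : ∃ t, t = K - 1 := ⟨_, rfl⟩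
  have ht1 : 1 ≤ t := by linarith
  have h1 := lam_ge hl (K := K) (by linarith)
  rw [← ht] at h1 ⊢
  have h2 : t ^ 4 / 24 ≤ lam K := by
    have h3 := Real.pow_div_factorial_le_exp t (by linarith) 4
    have h4 : Real.exp t ≤ Real.exp (Real.pi * t) :=
      Real.exp_le_exp.2 (by nlinarith [Real.pi_gt_three])
    norm_num [Nat.factorial] at h3
    linarith
  rw [le_div_iff₀ (by positivity)]
  have b1 := le_abs_self a
  have b2 := le_abs_self (1 / 2 * a * (a - 1))
  have a1 := abs_nonneg a
  have a2 := abs_nonneg (1 / 2 * a * (a - 1))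
  generalize 1 / 2 * a * (a - 1) = B at *
  have t1 : 1 ≤ t ^ 3 := one_le_pow₀ ht1
  have t2 : t ≤ t ^ 3 := by nlinarith [sq_nonneg (t - 1)]
  have t3 : t ^ 2 ≤ t ^ 3 := by nlinarith [sq_nonneg t]
  have q1 : a * t ≤ |a| * t ^ 3 := by
    calc a * t ≤ |a| * t := by gcongr
      _ ≤ _ := by gcongr
  have q2 : B * t ^ 2 ≤ |B| * t ^ 3 := by
    calc B * t ^ 2 ≤ |B| * t ^ 2 := by gcongr
      _ ≤ _ := by gcongr
  nlinarith

end

end Helpers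
theorem stmt_7 (lam : ℝ → ℝ)
    (hlam : ∀ K : ℝ, 0 < K → ∀ r ∈ Set.Ioo (0:ℝ) 1,
      mu r = Real.pi / (2 * K) → lam K = r ^ 2 / (1 - r ^ 2)) (a c : ℝ)
    (ha : a = 4 / Real.pi * ellK (1 / Real.sqrt 2) ^ 2)
    (hc : c = a * (4 * (a - 1) ^ 2 - a ^ 2) / 16) (f : ℝ → ℝ)
    (hf : f = fun K : ℝ =>
      (lam K - 1 - a * (K - 1) - 1 / 2 * a * (a - 1) * (K - 1) ^ 2) / (K - 1) ^ 3) :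
    StrictMonoOn f (Set.Ioi 1) ∧
    Filter.Tendsto f (nhdsWithin 1 (Set.Ioi 1)) (nhds c) ∧
    Filter.Tendsto f Filter.atTop Filter.atTop ∧
    f '' Set.Ioi 1 = Set.Ioi c := by
  have hl : ∀ u, 0 < u → lam (kap u) = u := fun u hu => lam_kap hlam hu
  rw [a_eq] at ha
  obtain ⟨hm, hcont, hlim⟩ := lam_main hl
  have htop := lam_top hl a
  rw [← ha, ← hf] at hm hcont hlim
  rw [← hc] at hlim
  rw [← hf] at htop
  refine ⟨hm, hlim, htop, ?_⟩
  have hge : ∀ K, 1 < K → c ≤ f K := by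
    intro K hK
    refine le_of_tendsto hlim ?_
    filter_upwards [Ioo_mem_nhdsGT hK] with x hx
    exact (hm hx.1 hK hx.2).le
  apply Subset.antisymm
  · rintro _ ⟨K, hK, rfl⟩
    have hK : 1 < K := hK
    have hK' : 1 < (1 + K) / 2 := by linarith
    exact lt_of_le_of_lt (hge _ hK') (hm hK' hK (by linarith))
  · intro y hy
    have hy : c < y := hy
    obtain ⟨K1, h1, h1'⟩ := ((hlim.eventually_lt_const hy).and self_mem_nhdsWithin).exists
    obtain ⟨K2, h2, h2'⟩ := ((htop.eventually_gt_atTop y).and (eventually_gt_atTop K1)).exists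
    have h1'' : 1 < K1 := h1'
    obtain ⟨K, hK, rfl⟩ := intermediate_value_Icc h2'.le
      (hcont.mono fun x hx => lt_of_lt_of_le h1'' hx.1) ⟨h1.le, h2.le⟩
    exact ⟨K, lt_of_lt_of_le h1'' hK.1, rfl⟩
end

section
/- Let a = (4/π)·𝒦(1/√2)², c = a·(4(a−1)² − a²)/16, and c₁ = 4√2·(√2+1)² − 1 − a − (1/2)a(a−1). Then for every K > 1, λ(K) > 1 + a(K−1) + (1/2)a(a−1)(K−1)² + c(K−1)³; and for every K ∈ (1,2), λ(K) < 1 + a(K−1) + (1/2)a(a−1)(K−1)² + c₁(K−1)³. -/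
open Set Filter

noncomputable def Yf (m : ℝ) : ℝ := ∫ θ in (0:ℝ)..(Real.pi / 2), (√(1 - m * Real.sin θ ^ 2))⁻¹
noncomputable def Ef (m : ℝ) : ℝ := ∫ θ in (0:ℝ)..(Real.pi / 2), √(1 - m * Real.sin θ ^ 2)
noncomputable def Zf (m : ℝ) : ℝ := (Ef m - (1 - m) * Yf m) / 2

lemma sin_sq_bd (θ : ℝ) : 0 ≤ Real.sin θ ^ 2 ∧ Real.sin θ ^ 2 ≤ 1 :=
  ⟨sq_nonneg _, Real.sin_sq_le_one θ⟩

lemma one_sub_pos {m : ℝ} (hm : m < 1) (θ : ℝ) : 0 < 1 - m * Real.sin θ ^ 2 := by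
  obtain ⟨h0, h1⟩ := sin_sq_bd θ
  rcases le_total m 0 with h | h
  · nlinarith [mul_nonneg (neg_nonneg.2 h) h0]
  · nlinarith [mul_le_mul_of_nonneg_left h1 h]

lemma one_sub_ge {m b : ℝ} (hm : m ≤ 1 - b) (hb : b ≤ 1) (θ : ℝ) :
    b ≤ 1 - m * Real.sin θ ^ 2 := by
  obtain ⟨h0, h1⟩ := sin_sq_bd θ
  rcases le_total m 0 with h | h
  · nlinarith [mul_nonneg (neg_nonneg.2 h) h0]
  · nlinarith [mul_le_mul_of_nonneg_left h1 h]

lemma cont_Y {m : ℝ} (hm : m < 1) : Continuous fun θ : ℝ => (√(1 - m * Real.sin θ ^ 2))⁻¹ := by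
  refine Continuous.inv₀ (by fun_prop) fun θ => ?_
  exact (Real.sqrt_pos.2 (one_sub_pos hm θ)).ne'

lemma cont_E (m : ℝ) : Continuous fun θ : ℝ => √(1 - m * Real.sin θ ^ 2) := by fun_prop

lemma Ef_cont : Continuous Ef := by
  unfold Ef
  apply intervalIntegral.continuous_parametric_intervalIntegral_of_continuous'
  unfold Function.uncurry
  fun_prop

lemma hasDeriv_Y0 {m : ℝ} (h0 : -1 < m) (hm : m < 1) :
    HasDerivAt Yf (∫ θ in (0:ℝ)..(Real.pi / 2),
      1 / 2 * Real.sin θ ^ 2 * (√(1 - m * Real.sin θ ^ 2))⁻¹ ^ 3) m := by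
  have hb : 0 < (1 - m) / 2 := by linarith
  refine (intervalIntegral.hasDerivAt_integral_of_dominated_loc_of_deriv_le
    (F := fun m θ => (√(1 - m * Real.sin θ ^ 2))⁻¹)
    (F' := fun m θ => 1 / 2 * Real.sin θ ^ 2 * (√(1 - m * Real.sin θ ^ 2))⁻¹ ^ 3)
    (bound := fun _ => ((√((1 - m) / 2))⁻¹) ^ 3)
    (s := Iio ((1 + m) / 2)) (Iio_mem_nhds (by linarith)) ?_ ?_ ?_ ?_ ?_ ?_).2
  · filter_upwards [Iio_mem_nhds hm] with x hx
    exact (cont_Y hx).aestronglyMeasurable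
  · exact (cont_Y hm).intervalIntegrable _ _
  · have := cont_Y hm
    exact Continuous.aestronglyMeasurable (by fun_prop)
  · refine Eventually.of_forall fun θ _ x hx => ?_
    have hx' : x ≤ 1 - (1 - m) / 2 := by have := mem_Iio.1 hx; linarith
    have h1 := one_sub_ge hx' (by linarith) θ
    have h2 : (√(1 - x * Real.sin θ ^ 2))⁻¹ ≤ (√((1 - m) / 2))⁻¹ := by
      apply inv_anti₀ (Real.sqrt_pos.2 hb)
      exact Real.sqrt_le_sqrt h1
    have h3 : 0 ≤ (√(1 - x * Real.sin θ ^ 2))⁻¹ := by positivity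
    rw [Real.norm_of_nonneg (by positivity)]
    have h4 := pow_le_pow_left₀ h3 h2 3
    obtain ⟨s0, s1⟩ := sin_sq_bd θ
    have h5 : 0 ≤ (√(1 - x * Real.sin θ ^ 2))⁻¹ ^ 3 := by positivity
    nlinarith [mul_le_mul_of_nonneg_right s1 h5]
  · exact intervalIntegrable_const
  · refine Eventually.of_forall fun θ _ x hx => ?_
    have hx' : x < 1 := by have := mem_Iio.1 hx; linarith
    have hp := one_sub_pos hx' θ
    have hs := Real.sqrt_pos.2 hp
    have h1 : HasDerivAt (fun x : ℝ => 1 - x * Real.sin θ ^ 2) (-(Real.sin θ ^ 2)) x := by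
      simpa using ((hasDerivAt_id x).mul_const (Real.sin θ ^ 2)).const_sub 1
    have h2 := (h1.sqrt hp.ne').inv hs.ne'
    refine h2.congr_deriv ?_
    field_simp

lemma hasDeriv_E0 {m : ℝ} (h0 : -1 < m) (hm : m < 1) :
    HasDerivAt Ef (∫ θ in (0:ℝ)..(Real.pi / 2),
      -(1 / 2 * Real.sin θ ^ 2 * (√(1 - m * Real.sin θ ^ 2))⁻¹)) m := by
  have hb : 0 < (1 - m) / 2 := by linarith
  refine (intervalIntegral.hasDerivAt_integral_of_dominated_loc_of_deriv_le
    (F := fun m θ => (√(1 - m * Real.sin θ ^ 2)))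
    (F' := fun m θ => -(1 / 2 * Real.sin θ ^ 2 * (√(1 - m * Real.sin θ ^ 2))⁻¹))
    (bound := fun _ => ((√((1 - m) / 2))⁻¹))
    (s := Iio ((1 + m) / 2)) (Iio_mem_nhds (by linarith)) ?_ ?_ ?_ ?_ ?_ ?_).2
  · filter_upwards [Iio_mem_nhds hm] with x hx
    exact (cont_E x).aestronglyMeasurable
  · exact (cont_E m).intervalIntegrable _ _
  · have := cont_Y hm
    exact Continuous.aestronglyMeasurable (by fun_prop)
  · refine Eventually.of_forall fun θ _ x hx => ?_
    have hx' : x ≤ 1 - (1 - m) / 2 := by have := mem_Iio.1 hx; linarith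
    have h1 := one_sub_ge hx' (by linarith) θ
    have h2 : (√(1 - x * Real.sin θ ^ 2))⁻¹ ≤ (√((1 - m) / 2))⁻¹ := by
      apply inv_anti₀ (Real.sqrt_pos.2 hb)
      exact Real.sqrt_le_sqrt h1
    have h3 : 0 ≤ (√(1 - x * Real.sin θ ^ 2))⁻¹ := by positivity
    rw [norm_neg, Real.norm_of_nonneg (by positivity)]
    obtain ⟨s0, s1⟩ := sin_sq_bd θ
    nlinarith [mul_le_mul_of_nonneg_right s1 h3]
  · exact intervalIntegrable_const
  · refine Eventually.of_forall fun θ _ x hx => ?_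
    have hx' : x < 1 := by have := mem_Iio.1 hx; linarith
    have hp := one_sub_pos hx' θ
    have hs := Real.sqrt_pos.2 hp
    have h1 : HasDerivAt (fun x : ℝ => 1 - x * Real.sin θ ^ 2) (-(Real.sin θ ^ 2)) x := by
      simpa using ((hasDerivAt_id x).mul_const (Real.sin θ ^ 2)).const_sub 1
    have h2 := (h1.sqrt hp.ne')
    refine h2.congr_deriv ?_
    field_simp

lemma hasDeriv_E {m : ℝ} (h0 : 0 < m) (hm : m < 1) :
    HasDerivAt Ef ((Ef m - Yf m) / (2 * m)) m := by
  convert hasDeriv_E0 (by linarith) hm using 1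
  unfold Ef Yf
  rw [← intervalIntegral.integral_sub ((cont_E m).intervalIntegrable _ _)
    ((cont_Y hm).intervalIntegrable _ _), ← intervalIntegral.integral_div]
  congr 1
  ext θ
  have hp := one_sub_pos hm θ
  have hs := Real.sqrt_pos.2 hp
  have hq := Real.sq_sqrt hp.le
  field_simp
  rw [hq]; ring

lemma hasDeriv_Y {m : ℝ} (h0 : 0 < m) (hm : m < 1) :
    HasDerivAt Yf (Zf m / (m * (1 - m))) m := by
  convert hasDeriv_Y0 (by linarith) hm using 1
  have hm1 : 0 < 1 - m := by linarith
  have key : ∫ θ in (0:ℝ)..(Real.pi / 2),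
      (m * (1 - m) * (1 / 2 * Real.sin θ ^ 2 * (√(1 - m * Real.sin θ ^ 2))⁻¹ ^ 3)
        - (√(1 - m * Real.sin θ ^ 2) - (1 - m) * (√(1 - m * Real.sin θ ^ 2))⁻¹) / 2) =
      -(m / 2) * (Real.sin (Real.pi / 2) * Real.cos (Real.pi / 2) *
        (√(1 - m * Real.sin (Real.pi / 2) ^ 2))⁻¹) -
      -(m / 2) * (Real.sin 0 * Real.cos 0 * (√(1 - m * Real.sin 0 ^ 2))⁻¹) := by
    refine intervalIntegral.integral_eq_sub_of_hasDerivAt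
      (f := fun θ => -(m / 2) * (Real.sin θ * Real.cos θ * (√(1 - m * Real.sin θ ^ 2))⁻¹)) ?_ ?_
    · intro θ _
      have hp := one_sub_pos hm θ
      have hs := Real.sqrt_pos.2 hp
      have hq := Real.sq_sqrt hp.le
      have h1 : HasDerivAt (fun θ : ℝ => 1 - m * Real.sin θ ^ 2)
          (-(m * (2 * Real.sin θ * Real.cos θ))) θ := by
        simpa using (((Real.hasDerivAt_sin θ).pow 2).const_mul m).const_sub 1
      have h2 := (h1.sqrt hp.ne').inv hs.ne'
      have h3 := (((Real.hasDerivAt_sin θ).mul (Real.hasDerivAt_cos θ)).mul h2).const_mul (-(m / 2))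
      refine h3.congr_deriv ?_
      try simp only [Pi.mul_apply, Pi.inv_apply]
      have hc := Real.cos_sq' θ
      generalize hS : √(1 - m * Real.sin θ ^ 2) = S at *
      generalize Real.sin θ = s at *
      generalize Real.cos θ = c at *
      field_simp
      have h4 : S ^ 4 = (1 - m * s ^ 2) ^ 2 := by rw [← hq]; ring
      have hcc : c * c = 1 - s ^ 2 := by rw [← hc]; ring
      ring_nf
      simp only [h4, hq, hc]
      ring
    · have := cont_Y hm
      apply Continuous.intervalIntegrable
      fun_prop
  have hcY := cont_Y hm
  rw [intervalIntegral.integral_sub (by apply Continuous.intervalIntegrable; fun_prop)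
    (by apply Continuous.intervalIntegrable; fun_prop), intervalIntegral.integral_const_mul,
    intervalIntegral.integral_div, intervalIntegral.integral_sub
    (by apply Continuous.intervalIntegrable; fun_prop)
    (by apply Continuous.intervalIntegrable; fun_prop), intervalIntegral.integral_const_mul] at key
  simp only [Real.sin_zero, Real.cos_pi_div_two, zero_mul, mul_zero, sub_zero] at key
  rw [div_eq_iff (by positivity), Zf, Ef, Yf]
  linarith

lemma hasDeriv_Z {m : ℝ} (h0 : 0 < m) (hm : m < 1) : HasDerivAt Zf (Yf m / 4) m := by
  have hm1 : 1 - m ≠ 0 := by linarith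
  have h := ((hasDeriv_E h0 hm).sub
    (((hasDerivAt_id m).const_sub 1).mul (hasDeriv_Y h0 hm))).div_const 2
  refine h.congr_deriv ?_
  simp only [Zf, id]
  field_simp
  ring

lemma Yf_contAt {m : ℝ} (h0 : -1 < m) (hm : m < 1) : ContinuousAt Yf m :=
  (hasDeriv_Y0 h0 hm).continuousAt

lemma Zf_contAt {m : ℝ} (h0 : -1 < m) (hm : m < 1) : ContinuousAt Zf m := by
  unfold Zf
  have := Yf_contAt h0 hm
  have := Ef_cont.continuousAt (x := m)
  fun_prop

lemma Yf_zero : Yf 0 = Real.pi / 2 := by simp [Yf]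
lemma Ef_zero : Ef 0 = Real.pi / 2 := by simp [Ef]
lemma Zf_zero : Zf 0 = 0 := by simp [Zf, Yf_zero, Ef_zero]
lemma Ef_one : Ef 1 = 1 := by
  have : Ef 1 = ∫ θ in (0:ℝ)..(Real.pi / 2), Real.cos θ := by
    apply intervalIntegral.integral_congr
    intro θ hθ
    rw [uIcc_of_le (by positivity)] at hθ
    have : 0 ≤ Real.cos θ := Real.cos_nonneg_of_mem_Icc ⟨by linarith [hθ.1, Real.pi_pos], hθ.2⟩
    show √(1 - 1 * Real.sin θ ^ 2) = _
    rw [one_mul, ← Real.cos_sq', Real.sqrt_sq this]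
  rw [this]; simp

lemma Yf_mono {m n : ℝ} (h : m ≤ n) (hn : n < 1) : Yf m ≤ Yf n := by
  apply intervalIntegral.integral_mono_on (by positivity)
    ((cont_Y (by linarith)).intervalIntegrable _ _) ((cont_Y hn).intervalIntegrable _ _)
  intro θ _
  apply inv_anti₀ (Real.sqrt_pos.2 (one_sub_pos hn θ))
  apply Real.sqrt_le_sqrt
  have := mul_le_mul_of_nonneg_right h (sin_sq_bd θ).1
  linarith

lemma Yf_pos {m : ℝ} (h0 : 0 ≤ m) (hm : m < 1) : 0 < Yf m := by
  have := Yf_mono h0 hm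
  rw [Yf_zero] at this
  linarith [Real.pi_pos]

lemma Yf_bd {m : ℝ} (h0 : 0 ≤ m) (hm : m < 1) : Yf m ≤ Real.pi / 2 * (√(1 - m))⁻¹ := by
  have : Yf m ≤ ∫ θ in (0:ℝ)..(Real.pi / 2), (√(1 - m))⁻¹ := by
    apply intervalIntegral.integral_mono_on (by positivity)
      ((cont_Y hm).intervalIntegrable _ _) intervalIntegrable_const
    intro θ _
    apply inv_anti₀ (Real.sqrt_pos.2 (by linarith))
    apply Real.sqrt_le_sqrt
    have := mul_le_mul_of_nonneg_left (sin_sq_bd θ).2 h0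
    linarith
  simpa using this

lemma Zf_bd {m : ℝ} (h0 : 0 < m) (hm : m < 1) : 0 < Zf m ∧ Zf m ≤ m * Yf m / 4 := by
  obtain ⟨ξ, hξ, h⟩ := exists_hasDerivAt_eq_slope Zf (fun m => Yf m / 4) h0
    (fun x hx => (Zf_contAt (by linarith [hx.1]) (by linarith [hx.2])).continuousWithinAt)
    (fun x hx => hasDeriv_Z hx.1 (by linarith [hx.2]))
  rw [Zf_zero, sub_zero, sub_zero, eq_div_iff h0.ne'] at h
  have h1 := Yf_mono hξ.2.le hm
  have h2 := Yf_pos hξ.1.le (hξ.2.trans hm)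
  rw [← h]
  exact ⟨by positivity, by nlinarith⟩

noncomputable def Wf (m : ℝ) : ℝ := Yf m * Zf (1 - m) + Yf (1 - m) * Zf m

lemma hasDeriv_W {m : ℝ} (h0 : 0 < m) (hm : m < 1) : HasDerivAt Wf 0 m := by
  have h1 : HasDerivAt (fun m : ℝ => 1 - m) (-1) m := by
    simpa using (hasDerivAt_id m).const_sub 1
  have hY := hasDeriv_Y h0 hm
  have hZ := hasDeriv_Z h0 hm
  have hY' : HasDerivAt (fun m => Yf (1 - m)) _ m :=
    HasDerivAt.comp m (hasDeriv_Y (m := 1 - m) (by linarith) (by linarith)) h1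
  have hZ' : HasDerivAt (fun m => Zf (1 - m)) _ m :=
    HasDerivAt.comp m (hasDeriv_Z (m := 1 - m) (by linarith) (by linarith)) h1
  have := (hY.mul hZ').add (hY'.mul hZ)
  refine this.congr_deriv ?_
  have : 1 - m ≠ 0 := by linarith
  have : 1 - (1 - m) = m := by ring
  rw [this]
  field_simp
  ring

lemma Wf_const {m n : ℝ} (hm : m ∈ Ioo (0:ℝ) 1) (hn : n ∈ Ioo (0:ℝ) 1) : Wf m = Wf n := by
  refine isOpen_Ioo.is_const_of_deriv_eq_zero isPreconnected_Ioo ?_ ?_ hm hn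
  · exact fun x hx => (hasDeriv_W hx.1 hx.2).differentiableAt.differentiableWithinAt
  · exact fun x hx => (hasDeriv_W hx.1 hx.2).deriv

open Topology in
lemma Wf_eq {m : ℝ} (hm : m ∈ Ioo (0:ℝ) 1) : Wf m = Real.pi / 4 := by
  have hev : ∀ᶠ x in 𝓝[>] (0:ℝ), x ∈ Ioo (0:ℝ) 1 := Ioo_mem_nhdsGT one_pos
  have h1 : Tendsto Wf (𝓝[>] 0) (𝓝 (Wf m)) := by
    refine tendsto_const_nhds.congr' ?_
    filter_upwards [hev] with x hx using Wf_const hm hx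
  have hY : Tendsto Yf (𝓝[>] 0) (𝓝 (Real.pi / 2)) := by
    rw [← Yf_zero]
    exact (Yf_contAt (by norm_num) (by norm_num)).tendsto.mono_left nhdsWithin_le_nhds
  have hsq : Tendsto (fun x : ℝ => √x) (𝓝[>] 0) (𝓝 0) := by
    have := (Real.continuous_sqrt.tendsto 0).mono_left (nhdsWithin_le_nhds (s := Ioi 0))
    simpa using this
  have hbd : ∀ x ∈ Ioo (0:ℝ) 1, x * Yf (1 - x) ≤ Real.pi / 2 * √x := by
    intro x hx
    have := Yf_bd (m := 1 - x) (by linarith [hx.2]) (by linarith [hx.1])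
    have h2 := mul_le_mul_of_nonneg_left this hx.1.le
    rw [sub_sub_cancel] at h2
    refine h2.trans (le_of_eq ?_)
    have h3 := Real.sqrt_pos.2 hx.1
    field_simp
    exact (Real.sq_sqrt hx.1.le).symm
  have hmY : Tendsto (fun x => x * Yf (1 - x)) (𝓝[>] 0) (𝓝 0) := by
    refine squeeze_zero' ?_ ?_ (by simpa using hsq.const_mul (Real.pi / 2))
    · filter_upwards [hev] with x hx
      exact mul_nonneg hx.1.le (Yf_pos (by linarith [hx.2]) (by linarith [hx.1])).le
    · filter_upwards [hev] with x hx using hbd x hx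
  have hZ1 : Tendsto (fun x => Zf (1 - x)) (𝓝[>] 0) (𝓝 (1 / 2)) := by
    have hE : Tendsto (fun x => Ef (1 - x)) (𝓝[>] 0) (𝓝 1) := by
      have : Continuous fun x => Ef (1 - x) := Ef_cont.comp (by fun_prop)
      have := (this.tendsto 0).mono_left (nhdsWithin_le_nhds (s := Ioi 0))
      simpa [Ef_one] using this
    have := (hE.sub hmY).div_const 2
    simp only [sub_zero] at this
    refine this.congr fun x => ?_
    simp [Zf]
  have hYZ : Tendsto (fun x => Yf (1 - x) * Zf x) (𝓝[>] 0) (𝓝 0) := by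
    have hlim : Tendsto (fun x => (x * Yf (1 - x)) * Yf x / 4) (𝓝[>] 0) (𝓝 0) := by
      simpa using (hmY.mul hY).div_const 4
    refine squeeze_zero' ?_ ?_ hlim
    · filter_upwards [hev] with x hx
      exact mul_nonneg (Yf_pos (by linarith [hx.2]) (by linarith [hx.1])).le (Zf_bd hx.1 hx.2).1.le
    · filter_upwards [hev] with x hx
      have h3 := Yf_pos (m := 1 - x) (by linarith [hx.2]) (by linarith [hx.1])
      have := mul_le_mul_of_nonneg_left (Zf_bd hx.1 hx.2).2 h3.le
      refine this.trans (le_of_eq (by ring))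
  have h2 : Tendsto Wf (𝓝[>] 0) (𝓝 (Real.pi / 2 * (1 / 2) + 0)) := (hY.mul hZ1).add hYZ
  have := tendsto_nhds_unique h1 h2
  rw [this]; ring

lemma landen {r : ℝ} (h0 : 0 < r) (h1 : r < 1) :
    Yf (4 * r / (1 + r) ^ 2) = (1 + r) * Yf (r ^ 2) := by
  have hr2 : r ^ 2 < 1 := by nlinarith
  have hM : 4 * r / (1 + r) ^ 2 < 1 := by
    rw [div_lt_one (by positivity)]; nlinarith [mul_pos (sub_pos.2 h1) (sub_pos.2 h1)]
  have hc2 := cont_Y hr2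
  have hpos : ∀ θ : ℝ, 0 < 1 + r * Real.sin θ ^ 2 := fun θ => by positivity
  have hpos' : ∀ θ : ℝ, 0 < 1 - r * Real.sin θ ^ 2 := fun θ => one_sub_pos h1 θ
  have key := intervalIntegral.integral_comp_mul_deriv'' (a := 0) (b := Real.pi / 2)
    (f := fun θ => Real.arcsin ((1 + r) * Real.sin θ / (1 + r * Real.sin θ ^ 2)))
    (f' := fun θ => (1 + r) * (1 - r * Real.sin θ ^ 2) / (1 + r * Real.sin θ ^ 2)
      * (√(1 - r ^ 2 * Real.sin θ ^ 2))⁻¹)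
    (g := fun θ => (√(1 - 4 * r / (1 + r) ^ 2 * Real.sin θ ^ 2))⁻¹) ?_ ?_ ?_ ?_
  · have e1 : Real.arcsin ((1 + r) * Real.sin 0 / (1 + r * Real.sin 0 ^ 2)) = 0 := by simp
    have e2 : Real.arcsin ((1 + r) * Real.sin (Real.pi / 2) / (1 + r * Real.sin (Real.pi / 2) ^ 2))
        = Real.pi / 2 := by
      have : (1 + r) ≠ 0 := by positivity
      simp [this]
    rw [e1, e2] at key
    rw [Yf, ← key, Yf, ← intervalIntegral.integral_const_mul]
    apply intervalIntegral.integral_congr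
    intro θ hθ
    rw [uIcc_of_le (by positivity)] at hθ
    have hs : 0 ≤ Real.sin θ := Real.sin_nonneg_of_nonneg_of_le_pi hθ.1 (by linarith [hθ.2, Real.pi_pos])
    have hs1 := Real.sin_le_one θ
    have hp := hpos θ
    have hp' := hpos' θ
    simp only [Function.comp]
    rw [Real.sin_arcsin]
    · have : 1 - 4 * r / (1 + r) ^ 2 * ((1 + r) * Real.sin θ / (1 + r * Real.sin θ ^ 2)) ^ 2
          = ((1 - r * Real.sin θ ^ 2) / (1 + r * Real.sin θ ^ 2)) ^ 2 := by
        field_simp; ring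
      rw [this, Real.sqrt_sq (by positivity)]
      have := hp'.ne'
      field_simp
    · have : 0 ≤ (1 + r) * Real.sin θ / (1 + r * Real.sin θ ^ 2) := by positivity
      linarith
    · rw [div_le_one hp]
      nlinarith [mul_nonneg (sub_nonneg.2 hs1) (by nlinarith : 0 ≤ 1 - r * Real.sin θ)]
  · refine Continuous.continuousOn (Real.continuous_arcsin.comp ?_)
    exact Continuous.div (by fun_prop) (by fun_prop) fun θ => (hpos θ).ne'
  · intro θ hθ
    rw [min_eq_left (by positivity), max_eq_right (by positivity)] at hθ
    apply HasDerivAt.hasDerivWithinAt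
    have hs : 0 < Real.sin θ := Real.sin_pos_of_pos_of_lt_pi hθ.1 (by linarith [hθ.2, Real.pi_pos])
    have hc : 0 < Real.cos θ := Real.cos_pos_of_mem_Ioo ⟨by linarith [hθ.1, Real.pi_pos], hθ.2⟩
    have hp := hpos θ
    have hp' := hpos' θ
    have hΔ := one_sub_pos hr2 θ
    have hΔs := Real.sqrt_pos.2 hΔ
    have hcs := Real.cos_sq' θ
    have hsq : 1 - ((1 + r) * Real.sin θ / (1 + r * Real.sin θ ^ 2)) ^ 2 =
        (Real.cos θ * √(1 - r ^ 2 * Real.sin θ ^ 2) / (1 + r * Real.sin θ ^ 2)) ^ 2 := by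
      rw [div_pow (Real.cos θ * _), mul_pow, Real.sq_sqrt hΔ.le, hcs]
      field_simp; ring
    have hlt : 0 < 1 - ((1 + r) * Real.sin θ / (1 + r * Real.sin θ ^ 2)) ^ 2 := by
      rw [hsq]; positivity
    have hA := Real.hasDerivAt_arcsin (x := (1 + r) * Real.sin θ / (1 + r * Real.sin θ ^ 2))
      (by intro h; rw [h] at hlt; norm_num at hlt) (by intro h; rw [h] at hlt; norm_num at hlt)
    have hB : HasDerivAt (fun θ => (1 + r) * Real.sin θ / (1 + r * Real.sin θ ^ 2)) _ θ :=
      ((Real.hasDerivAt_sin θ).const_mul (1 + r)).div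
      ((((Real.hasDerivAt_sin θ).pow 2).const_mul r).const_add 1) hp.ne'
    have hC := HasDerivAt.comp θ hA hB
    refine hC.congr_deriv ?_
    rw [hsq, Real.sqrt_sq (by positivity)]
    try simp only [Pi.pow_apply]
    field_simp
    push_cast
    ring
  · apply Continuous.continuousOn
    refine Continuous.mul (Continuous.div (by fun_prop) (by fun_prop) fun θ => (hpos θ).ne') hc2
  · exact (cont_Y hM).continuousOn

lemma pos_of_deriv {h h' : ℝ → ℝ} (h0 : h 0 = 0) (hd : ∀ t, 0 ≤ t → HasDerivAt h (h' t) t)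
    (hp : ∀ t, 0 < t → 0 < h' t) {t : ℝ} (ht : 0 < t) : 0 < h t := by
  rw [← h0]
  refine strictMonoOn_of_deriv_pos (convex_Ici 0)
    (fun x hx => (hd x hx).continuousAt.continuousWithinAt) ?_ (mem_Ici.2 le_rfl)
    (mem_Ici.2 ht.le) ht
  intro x hx
  rw [interior_Ici] at hx
  rw [(hd x (le_of_lt hx)).deriv]
  exact hp x hx

lemma abstract_bounds (f0 f1 f2 f3 f4 φ w : ℝ → ℝ)
    (h0 : ∀ t, 0 ≤ t → HasDerivAt f0 (f1 t * w t) t)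
    (h1 : ∀ t, 0 ≤ t → HasDerivAt f1 (f2 t * w t) t)
    (h2 : ∀ t, 0 ≤ t → HasDerivAt f2 (f3 t * w t) t)
    (h3 : ∀ t, 0 ≤ t → HasDerivAt f3 (f4 t * w t) t)
    (hφ : ∀ t, 0 ≤ t → HasDerivAt φ (w t) t)
    (hw : ∀ t, 0 ≤ t → 0 < w t) (h4 : ∀ t, 0 ≤ t → 0 < f4 t) (hφ0 : φ 0 = 1) :
    (∀ t, 0 < t → f0 0 + f1 0 * (φ t - 1) + f2 0 / 2 * (φ t - 1) ^ 2 + f3 0 / 6 * (φ t - 1) ^ 3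
      < f0 t) ∧
    (∀ t s, 0 < t → t < s →
      (f0 t - (f0 0 + f1 0 * (φ t - 1) + f2 0 / 2 * (φ t - 1) ^ 2)) / (φ t - 1) ^ 3 <
      (f0 s - (f0 0 + f1 0 * (φ s - 1) + f2 0 / 2 * (φ s - 1) ^ 2)) / (φ s - 1) ^ 3) := by
  have hx : ∀ t, 0 < t → 0 < φ t - 1 := fun t ht =>
    pos_of_deriv (h := fun t => φ t - 1) (by simp [hφ0])
      (fun t ht => (hφ t ht).sub_const 1) (fun t ht => hw t ht.le) ht
  have hX : ∀ t, 0 ≤ t → HasDerivAt (fun t => φ t - 1) (w t) t :=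
    fun t ht => (hφ t ht).sub_const 1
  have hP : ∀ c0 c1 c2 : ℝ, ∀ t, 0 ≤ t →
      HasDerivAt (fun t => c0 + c1 * (φ t - 1) + c2 / 2 * (φ t - 1) ^ 2)
        ((c1 + c2 * (φ t - 1)) * w t) t := by
    intro c0 c1 c2 t ht
    refine ((((hX t ht).const_mul c1).const_add c0).add
      (((hX t ht).pow 2).const_mul (c2 / 2))).congr_deriv ?_
    push_cast; ring
  constructor
  · have g3 : ∀ t, 0 < t → 0 < f3 t - f3 0 := fun t ht =>
      pos_of_deriv (h := fun t => f3 t - f3 0) (by simp)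
        (fun t ht => (h3 t ht).sub_const _) (fun t ht => mul_pos (h4 t ht.le) (hw t ht.le)) ht
    have g2 : ∀ t, 0 < t → 0 < f2 t - (f2 0 + f3 0 * (φ t - 1)) := fun t ht =>
      pos_of_deriv (h := fun t => f2 t - (f2 0 + f3 0 * (φ t - 1)))
        (h' := fun t => (f3 t - f3 0) * w t) (by simp [hφ0])
        (fun t ht => ((h2 t ht).sub (((hX t ht).const_mul (f3 0)).const_add (f2 0))).congr_deriv
          (by ring)) (fun t ht => mul_pos (g3 t ht) (hw t ht.le)) ht
    have g1 : ∀ t, 0 < t → 0 < f1 t - (f1 0 + f2 0 * (φ t - 1) + f3 0 / 2 * (φ t - 1) ^ 2) :=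
      fun t ht => pos_of_deriv
        (h := fun t => f1 t - (f1 0 + f2 0 * (φ t - 1) + f3 0 / 2 * (φ t - 1) ^ 2))
        (h' := fun t => (f2 t - (f2 0 + f3 0 * (φ t - 1))) * w t) (by simp [hφ0])
        (fun t ht => ((h1 t ht).sub (hP _ _ _ t ht)).congr_deriv
          (by ring)) (fun t ht => mul_pos (g2 t ht) (hw t ht.le)) ht
    have g0 : ∀ t, 0 < t → 0 < f0 t - (f0 0 + f1 0 * (φ t - 1) + f2 0 / 2 * (φ t - 1) ^ 2
        + f3 0 / 6 * (φ t - 1) ^ 3) :=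
      fun t ht => pos_of_deriv
        (h := fun t => f0 t - (f0 0 + f1 0 * (φ t - 1) + f2 0 / 2 * (φ t - 1) ^ 2
          + f3 0 / 6 * (φ t - 1) ^ 3))
        (h' := fun t => (f1 t - (f1 0 + f2 0 * (φ t - 1) + f3 0 / 2 * (φ t - 1) ^ 2)) * w t)
        (by simp [hφ0])
        (fun t ht => ((h0 t ht).sub ((hP _ _ _ t ht).add
          (((hX t ht).pow 3).const_mul (f3 0 / 6)))).congr_deriv
          (by push_cast; ring)) (fun t ht => mul_pos (g1 t ht) (hw t ht.le)) ht
    intro t ht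
    linarith [g0 t ht]
  · have d0 : ∀ t, 0 ≤ t → HasDerivAt
        (fun t => f0 t - (f0 0 + f1 0 * (φ t - 1) + f2 0 / 2 * (φ t - 1) ^ 2))
        ((f1 t - (f1 0 + f2 0 * (φ t - 1))) * w t) t := fun t ht =>
      ((h0 t ht).sub (hP _ _ _ t ht)).congr_deriv (by ring)
    have d1 : ∀ t, 0 ≤ t → HasDerivAt
        (fun t => f1 t - (f1 0 + f2 0 * (φ t - 1))) ((f2 t - f2 0) * w t) t := fun t ht =>
      ((h1 t ht).sub (((hX t ht).const_mul (f2 0)).const_add (f1 0))).congr_deriv (by ring)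
    have g3 : ∀ t, 0 < t → 0 < f3 t * (φ t - 1) - (f2 t - f2 0) := fun t ht =>
      pos_of_deriv (h := fun t => f3 t * (φ t - 1) - (f2 t - f2 0))
        (h' := fun t => f4 t * (φ t - 1) * w t) (by simp [hφ0])
        (fun t ht => (((h3 t ht).mul (hX t ht)).sub ((h2 t ht).sub_const _)).congr_deriv (by ring))
        (fun t ht => mul_pos (mul_pos (h4 t ht.le) (hx t ht)) (hw t ht.le)) ht
    have g2 : ∀ t, 0 < t →
        0 < (f2 t - f2 0) * (φ t - 1) - 2 * (f1 t - (f1 0 + f2 0 * (φ t - 1))) := fun t ht =>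
      pos_of_deriv
        (h := fun t => (f2 t - f2 0) * (φ t - 1) - 2 * (f1 t - (f1 0 + f2 0 * (φ t - 1))))
        (h' := fun t => (f3 t * (φ t - 1) - (f2 t - f2 0)) * w t) (by simp [hφ0])
        (fun t ht => ((((h2 t ht).sub_const _).mul (hX t ht)).sub
          ((d1 t ht).const_mul 2)).congr_deriv (by ring))
        (fun t ht => mul_pos (g3 t ht) (hw t ht.le)) ht
    have g1 : ∀ t, 0 < t →
        0 < (f1 t - (f1 0 + f2 0 * (φ t - 1))) * (φ t - 1) -
          3 * (f0 t - (f0 0 + f1 0 * (φ t - 1) + f2 0 / 2 * (φ t - 1) ^ 2)) := fun t ht =>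
      pos_of_deriv
        (h := fun t => (f1 t - (f1 0 + f2 0 * (φ t - 1))) * (φ t - 1) -
          3 * (f0 t - (f0 0 + f1 0 * (φ t - 1) + f2 0 / 2 * (φ t - 1) ^ 2)))
        (h' := fun t => ((f2 t - f2 0) * (φ t - 1) - 2 * (f1 t - (f1 0 + f2 0 * (φ t - 1)))) * w t)
        (by simp [hφ0])
        (fun t ht => (((d1 t ht).mul (hX t ht)).sub
          ((d0 t ht).const_mul 3)).congr_deriv (by ring))
        (fun t ht => mul_pos (g2 t ht) (hw t ht.le)) ht
    have dg : ∀ t, 0 < t → HasDerivAt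
        (fun t => (f0 t - (f0 0 + f1 0 * (φ t - 1) + f2 0 / 2 * (φ t - 1) ^ 2)) / (φ t - 1) ^ 3)
        (((f1 t - (f1 0 + f2 0 * (φ t - 1))) * (φ t - 1) -
          3 * (f0 t - (f0 0 + f1 0 * (φ t - 1) + f2 0 / 2 * (φ t - 1) ^ 2))) * w t
          / (φ t - 1) ^ 4) t := by
      intro t ht
      have hxt := hx t ht
      refine ((d0 t ht.le).div ((hX t ht.le).pow 3) (pow_pos hxt 3).ne').congr_deriv ?_
      simp only [Pi.pow_apply]
      generalize φ t - 1 = X at *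
      push_cast
      field_simp
    intro t s ht hts
    refine strictMonoOn_of_deriv_pos (convex_Ioi (0:ℝ))
      (fun x hx => (dg x hx).continuousAt.continuousWithinAt) ?_ (mem_Ioi.2 ht)
      (mem_Ioi.2 (ht.trans hts)) hts
    intro x hx'
    rw [interior_Ioi] at hx'
    rw [(dg x hx').deriv]
    have := g1 x hx'
    have := hw x (le_of_lt hx')
    have := hx x hx'
    positivity

noncomputable def Mf (t : ℝ) : ℝ := 1 / (1 + Real.exp t)
noncomputable def vf (t : ℝ) : ℝ := 4 / Real.pi * Yf (Mf t) ^ 2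
noncomputable def pf (t : ℝ) : ℝ := 4 / Real.pi * (Yf (Mf t) * Zf (Mf t))
noncomputable def phif (t : ℝ) : ℝ := Yf (1 - Mf t) / Yf (Mf t)

lemma Mf_mem (t : ℝ) : 0 < Mf t ∧ Mf t < 1 := by
  have := Real.exp_pos t
  unfold Mf
  refine ⟨by positivity, ?_⟩
  rw [div_lt_one (by positivity)]; linarith

lemma Mf_le {t : ℝ} (ht : 0 ≤ t) : Mf t ≤ 1 / 2 := by
  have := Real.one_le_exp ht
  unfold Mf
  apply one_div_le_one_div_of_le <;> linarith

lemma hasDeriv_M (t : ℝ) : HasDerivAt Mf (-(Mf t * (1 - Mf t))) t := by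
  have := Real.exp_pos t
  have h := ((Real.hasDerivAt_exp t).const_add 1).inv (by positivity)
  have e : Mf = fun t => (1 + Real.exp t)⁻¹ := by ext t; simp [Mf]
  have h' : HasDerivAt Mf (-Real.exp t / (1 + Real.exp t) ^ 2) t := by rw [e]; exact h
  refine h'.congr_deriv ?_
  unfold Mf
  field_simp
  ring

lemma hasDeriv_YM (t : ℝ) : HasDerivAt (fun t => Yf (Mf t)) (-Zf (Mf t)) t := by
  obtain ⟨h0, h1⟩ := Mf_mem t
  have h : HasDerivAt (fun t => Yf (Mf t)) _ t :=
    HasDerivAt.comp t (hasDeriv_Y h0 h1) (hasDeriv_M t)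
  refine h.congr_deriv ?_
  have : 1 - Mf t ≠ 0 := by linarith
  field_simp

lemma hasDeriv_ZM (t : ℝ) :
    HasDerivAt (fun t => Zf (Mf t)) (-(Mf t * (1 - Mf t) * Yf (Mf t) / 4)) t := by
  obtain ⟨h0, h1⟩ := Mf_mem t
  have h : HasDerivAt (fun t => Zf (Mf t)) _ t :=
    HasDerivAt.comp t (hasDeriv_Z h0 h1) (hasDeriv_M t)
  refine h.congr_deriv ?_
  ring

lemma hasDeriv_v (t : ℝ) : HasDerivAt vf (-(2 * pf t)) t := by
  refine (((hasDeriv_YM t).pow 2).const_mul (4 / Real.pi)).congr_deriv ?_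
  unfold pf
  push_cast; ring

lemma YM_pos (t : ℝ) : 0 < Yf (Mf t) := Yf_pos (Mf_mem t).1.le (Mf_mem t).2

lemma v_pos (t : ℝ) : 0 < vf t := by
  have := YM_pos t
  have := Real.pi_pos
  unfold vf; positivity

lemma hasDeriv_p (t : ℝ) :
    HasDerivAt pf (-(pf t ^ 2 / vf t + Mf t * (1 - Mf t) / 4 * vf t)) t := by
  refine (((hasDeriv_YM t).mul (hasDeriv_ZM t)).const_mul (4 / Real.pi)).congr_deriv ?_
  have := YM_pos t
  have := Real.pi_pos
  unfold pf vf
  field_simp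
  ring

lemma p_bd {t : ℝ} (ht : 0 ≤ t) : 0 < pf t ∧ 8 * pf t ≤ vf t := by
  obtain ⟨h0, h1⟩ := Mf_mem t
  obtain ⟨z0, z1⟩ := Zf_bd h0 h1
  have hy := YM_pos t
  have hpi := Real.pi_pos
  have hM := Mf_le ht
  have hz : 8 * Zf (Mf t) ≤ Yf (Mf t) := by nlinarith
  refine ⟨by unfold pf; positivity, ?_⟩
  have : vf t - 8 * pf t = 4 / Real.pi * Yf (Mf t) * (Yf (Mf t) - 8 * Zf (Mf t)) := by
    unfold pf vf; ring
  have h2 : 0 ≤ 4 / Real.pi * Yf (Mf t) * (Yf (Mf t) - 8 * Zf (Mf t)) :=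
    mul_nonneg (by positivity) (by linarith)
  linarith

lemma hasDeriv_phi (t : ℝ) : HasDerivAt phif (vf t)⁻¹ t := by
  obtain ⟨h0, h1⟩ := Mf_mem t
  have hy := YM_pos t
  have hM1 : HasDerivAt (fun t => 1 - Mf t) (Mf t * (1 - Mf t)) t := by
    simpa using (hasDeriv_M t).const_sub 1
  have hY1 : HasDerivAt (fun t => Yf (1 - Mf t)) (Zf (1 - Mf t)) t := by
    have h : HasDerivAt (fun t => Yf (1 - Mf t)) _ t :=
      HasDerivAt.comp (h₂ := Yf) (h := fun t => 1 - Mf t) t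
        (hasDeriv_Y (m := 1 - Mf t) (by linarith) (by linarith)) hM1
    refine h.congr_deriv ?_
    rw [sub_sub_cancel]
    have : 1 - Mf t ≠ 0 := by linarith
    field_simp
  refine (hY1.div (hasDeriv_YM t) hy.ne').congr_deriv ?_
  have hW := Wf_eq ⟨h0, h1⟩
  unfold Wf at hW
  have hpi := Real.pi_pos
  have e : Zf (1 - Mf t) * Yf (Mf t) - Yf (1 - Mf t) * -Zf (Mf t) = Real.pi / 4 := by
    rw [← hW]; ring
  rw [e]
  unfold vf
  field_simp

lemma Mf_zero : Mf 0 = 1 / 2 := by norm_num [Mf]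

lemma phi_zero : phif 0 = 1 := by
  have := YM_pos 0
  unfold phif
  have e : 1 - Mf 0 = Mf 0 := by rw [Mf_zero]; norm_num
  rw [e, div_self this.ne']

lemma p_zero : pf 0 = 1 / 2 := by
  have hW := Wf_eq (m := 1 / 2) (by norm_num)
  unfold Wf at hW
  unfold pf
  rw [Mf_zero]
  have hpi := Real.pi_pos
  have e : (1:ℝ) - 1 / 2 = 1 / 2 := by norm_num
  rw [e] at hW
  have : Yf (1 / 2) * Zf (1 / 2) = Real.pi / 8 := by linarith
  rw [this]; field_simp; norm_num

noncomputable def f1 (t : ℝ) : ℝ := Real.exp t * vf t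
noncomputable def f2 (t : ℝ) : ℝ := Real.exp t * (vf t ^ 2 - 2 * vf t * pf t)
noncomputable def f3 (t : ℝ) : ℝ := Real.exp t * (vf t ^ 3 - 6 * vf t ^ 2 * pf t
  + 6 * vf t * pf t ^ 2 + Mf t * (1 - Mf t) / 2 * vf t ^ 3)
noncomputable def f4 (t : ℝ) : ℝ := Real.exp t * vf t *
  (vf t ^ 3 * (1 + 2 * (Mf t * (1 - Mf t)) - Mf t * (1 - Mf t) * (1 - 2 * Mf t) / 2)
    - 12 * vf t ^ 2 * pf t * (1 + Mf t * (1 - Mf t) / 2) + 36 * vf t * pf t ^ 2 - 24 * pf t ^ 3)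

lemma d0 (t : ℝ) : HasDerivAt Real.exp (f1 t * (vf t)⁻¹) t := by
  refine (Real.hasDerivAt_exp t).congr_deriv ?_
  have := v_pos t
  unfold f1; field_simp

lemma d1 (t : ℝ) : HasDerivAt f1 (f2 t * (vf t)⁻¹) t := by
  refine ((Real.hasDerivAt_exp t).mul (hasDeriv_v t)).congr_deriv ?_
  have := v_pos t
  unfold f2; field_simp; ring

lemma d2 (t : ℝ) : HasDerivAt f2 (f3 t * (vf t)⁻¹) t := by
  refine ((Real.hasDerivAt_exp t).mul (((hasDeriv_v t).pow 2).sub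
    (((hasDeriv_v t).const_mul 2).mul (hasDeriv_p t)))).congr_deriv ?_
  have := v_pos t
  unfold f3
  simp only [Pi.pow_apply, Pi.sub_apply, Pi.mul_apply]
  push_cast
  field_simp; ring

lemma d3 (t : ℝ) : HasDerivAt f3 (f4 t * (vf t)⁻¹) t := by
  have hv := hasDeriv_v t
  have hp := hasDeriv_p t
  have hM := hasDeriv_M t
  refine ((Real.hasDerivAt_exp t).mul ((((hv.pow 3).sub (((hv.pow 2).const_mul 6).mul hp)).add
    ((hv.const_mul 6).mul (hp.pow 2))).add
      (((hM.mul (hM.const_sub 1)).div_const 2).mul (hv.pow 3)))).congr_deriv ?_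
  have := v_pos t
  unfold f4
  simp only [Pi.pow_apply, Pi.sub_apply, Pi.mul_apply, Pi.add_apply]
  push_cast
  field_simp; ring

lemma f4_pos {t : ℝ} (ht : 0 ≤ t) : 0 < f4 t := by
  have hv := v_pos t
  obtain ⟨hp, hvp⟩ := p_bd ht
  obtain ⟨h0, h1⟩ := Mf_mem t
  have hM := Mf_le ht
  unfold f4
  refine mul_pos (mul_pos (Real.exp_pos t) hv) ?_
  generalize vf t = v at *
  generalize pf t = p at *
  generalize Mf t = m at *
  obtain ⟨d, rfl⟩ : ∃ d, v = 8 * p + d := ⟨v - 8 * p, by ring⟩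
  have hd : 0 ≤ d := by linarith
  have hq : 0 < m * (1 - m) := mul_pos h0 (by linarith)
  have e : (8 * p + d) ^ 3 * (1 + 2 * (m * (1 - m)) - m * (1 - m) * (1 - 2 * m) / 2)
    - 12 * (8 * p + d) ^ 2 * p * (1 + m * (1 - m) / 2) + 36 * (8 * p + d) * p ^ 2 - 24 * p ^ 3 =
    (8 * p ^ 3 + 36 * p ^ 2 * d + 12 * p * d ^ 2 + d ^ 3) +
    m * (1 - m) * (8 * p + d) ^ 2 * ((8 * p + d) * (3 / 2 + m) - 6 * p) := by ring
  rw [e]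
  have : 0 ≤ (8 * p + d) * (3 / 2 + m) - 6 * p := by nlinarith [mul_nonneg hd h0.le, mul_pos hp h0]
  positivity

lemma Y_eq_ellK {r : ℝ} (h : r ^ 2 < 1) : ellK r = Yf (r ^ 2) := by
  unfold ellK Yf
  congr 1
  ext θ
  rw [Real.rpow_neg (one_sub_pos h θ).le, Real.sqrt_eq_rpow]

lemma phi_surj {K : ℝ} (hK : 1 < K) : ∃ t, 0 < t ∧ phif t = K := by
  have hv0 := v_pos 0
  have hlow : ∀ t, 0 ≤ t → 1 + (vf 0)⁻¹ * t ≤ phif t := by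
    intro t ht
    have hmono : MonotoneOn (fun t => phif t - (vf 0)⁻¹ * t) (Ici 0) := by
      have hd : ∀ x, HasDerivAt (fun t => phif t - (vf 0)⁻¹ * t) ((vf x)⁻¹ - (vf 0)⁻¹) x := by
        intro x
        refine ((hasDeriv_phi x).sub ((hasDerivAt_id x).const_mul (vf 0)⁻¹)).congr_deriv ?_
        rw [mul_one]
      refine monotoneOn_of_deriv_nonneg (convex_Ici 0)
        (fun x _ => (hd x).continuousAt.continuousWithinAt)
        (fun x _ => (hd x).differentiableAt.differentiableWithinAt) ?_
      intro x hx
      rw [interior_Ici] at hx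
      rw [(hd x).deriv, sub_nonneg]
      apply inv_anti₀ (v_pos x)
      have hy : Yf (Mf x) ≤ Yf (Mf 0) := by
        apply Yf_mono _ (Mf_mem 0).2
        rw [Mf_zero]; exact Mf_le (le_of_lt hx)
      have := YM_pos x
      have := Real.pi_pos
      unfold vf
      gcongr
    have := hmono (mem_Ici.2 le_rfl) (mem_Ici.2 ht) ht
    simp only [mul_zero, sub_zero, phi_zero] at this
    linarith
  have hT : 0 ≤ vf 0 * (K - 1) := mul_nonneg hv0.le (by linarith)
  have hc : ContinuousOn phif (Icc 0 (vf 0 * (K - 1))) :=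
    fun x _ => (hasDeriv_phi x).continuousAt.continuousWithinAt
  have hT2 := hlow _ hT
  have : (vf 0)⁻¹ * (vf 0 * (K - 1)) = K - 1 := by field_simp
  rw [this] at hT2
  obtain ⟨t, ht, hte⟩ := intermediate_value_Icc hT hc
    (show K ∈ Icc (phif 0) (phif (vf 0 * (K - 1))) from
      ⟨by rw [phi_zero]; exact hK.le, by linarith⟩)
  refine ⟨t, lt_of_le_of_ne ht.1 ?_, hte⟩
  rintro rfl
  rw [phi_zero] at hte
  linarith

lemma lam_eq (lam : ℝ → ℝ)
    (hlam : ∀ K : ℝ, 0 < K → ∀ r ∈ Set.Ioo (0:ℝ) 1,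
      mu r = Real.pi / (2 * K) → lam K = r ^ 2 / (1 - r ^ 2)) (t : ℝ) :
    lam (phif t) = Real.exp t := by
  obtain ⟨h0, h1⟩ := Mf_mem t
  have hy := YM_pos t
  have hy1 : 0 < Yf (1 - Mf t) := Yf_pos (by linarith) (by linarith)
  have hsq : √(1 - Mf t) ^ 2 = 1 - Mf t := Real.sq_sqrt (by linarith)
  have hsq2 : √(Mf t) ^ 2 = Mf t := Real.sq_sqrt (by linarith)
  have h := hlam (phif t) (by unfold phif; positivity) (√(1 - Mf t))
    ⟨Real.sqrt_pos.2 (by linarith), by rw [Real.sqrt_lt' one_pos]; linarith⟩ ?_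
  · rw [h, hsq]
    have := Real.exp_pos t
    unfold Mf
    field_simp
    ring
  · unfold mu
    rw [hsq, sub_sub_cancel, Y_eq_ellK (by rw [hsq2]; exact h1),
      Y_eq_ellK (by rw [hsq]; linarith), hsq, hsq2]
    unfold phif
    field_simp

lemma phi_two : phif (Real.log (4 * √2 * (√2 + 1) ^ 2)) = 2 := by
  have h2 : √2 ^ 2 = (2:ℝ) := Real.sq_sqrt (by norm_num)
  have hs : 1 < √2 := by
    rw [Real.lt_sqrt] <;> norm_num
  have hM : Mf (Real.log (4 * √2 * (√2 + 1) ^ 2)) = ((√2 - 1) ^ 2) ^ 2 := by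
    unfold Mf
    rw [Real.exp_log (by positivity), div_eq_iff (by positivity)]
    generalize √2 = s at *
    have h3 : s ^ 3 = 2 * s := by rw [pow_succ, h2]
    grobner
  have hl1 : (√2 - 1) ^ 2 < 1 := by nlinarith
  have hl0 : 0 < (√2 - 1) ^ 2 := pow_pos (by linarith) 2
  have e1 := landen hl0 hl1
  have e2 := landen (r := √2 / 2) (by positivity) (by nlinarith)
  have a1 : 4 * (√2 - 1) ^ 2 / (1 + (√2 - 1) ^ 2) ^ 2 = 1 / 2 := by
    rw [div_eq_iff (by positivity)]
    generalize √2 = s at *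
    grobner
  have a2 : 4 * (√2 / 2) / (1 + √2 / 2) ^ 2 = 1 - ((√2 - 1) ^ 2) ^ 2 := by
    rw [div_eq_iff (by positivity)]
    generalize √2 = s at *
    grobner
  have a3 : (√2 / 2) ^ 2 = 1 / 2 := by rw [div_pow, h2]; norm_num
  rw [a1] at e1
  rw [a2, a3] at e2
  unfold phif
  rw [hM, e2, e1]
  have : 0 < Yf (((√2 - 1) ^ 2) ^ 2) := Yf_pos (by positivity) (by nlinarith)
  rw [div_eq_iff this.ne', ← mul_assoc]
  congr 1
  generalize √2 = s at *
  grobner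

theorem stmt_8 (lam : ℝ → ℝ)
    (hlam : ∀ K : ℝ, 0 < K → ∀ r ∈ Set.Ioo (0:ℝ) 1,
      mu r = Real.pi / (2 * K) → lam K = r ^ 2 / (1 - r ^ 2)) (a c c₁ : ℝ)
    (ha : a = 4 / Real.pi * ellK (1 / Real.sqrt 2) ^ 2)
    (hc : c = a * (4 * (a - 1) ^ 2 - a ^ 2) / 16)
    (hc₁ : c₁ = 4 * Real.sqrt 2 * (Real.sqrt 2 + 1) ^ 2 - 1 - a - 1 / 2 * a * (a - 1)) :
    (∀ K : ℝ, 1 < K →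
      1 + a * (K - 1) + 1 / 2 * a * (a - 1) * (K - 1) ^ 2 + c * (K - 1) ^ 3 < lam K) ∧
    (∀ K ∈ Set.Ioo (1:ℝ) 2,
      lam K < 1 + a * (K - 1) + 1 / 2 * a * (a - 1) * (K - 1) ^ 2 + c₁ * (K - 1) ^ 3) := by
  obtain ⟨hlo, hup⟩ := abstract_bounds Real.exp f1 f2 f3 f4 phif (fun t => (vf t)⁻¹)
    (fun t _ => d0 t) (fun t _ => d1 t) (fun t _ => d2 t) (fun t _ => d3 t)
    (fun t _ => hasDeriv_phi t) (fun t _ => inv_pos.2 (v_pos t)) (fun t ht => f4_pos ht) phi_zero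
  have hv : vf 0 = a := by
    have e : (1 / √2) ^ 2 = (1 / 2 : ℝ) := by
      rw [div_pow, Real.sq_sqrt (by norm_num)]; norm_num
    rw [ha, Y_eq_ellK (by rw [e]; norm_num), e, vf, Mf_zero]
  have hf1 : f1 0 = a := by simp [f1, hv]
  have hf2 : f2 0 = a * (a - 1) := by simp only [f2, hv, p_zero, Real.exp_zero]; ring
  have hf3 : f3 0 = 6 * c := by
    simp only [f3, hv, p_zero, Real.exp_zero, Mf_zero, hc]; ring
  rw [hf1, hf2, hf3, Real.exp_zero] at hlo
  rw [hf1, hf2, Real.exp_zero] at hup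
  constructor
  · intro K hK
    obtain ⟨t, ht, rfl⟩ := phi_surj hK
    rw [lam_eq lam hlam]
    have := hlo t ht
    linarith
  · rintro K ⟨hK, hK2⟩
    obtain ⟨t, ht, rfl⟩ := phi_surj hK
    rw [lam_eq lam hlam]
    have hmono : StrictMono phif :=
      strictMono_of_hasDerivAt_pos hasDeriv_phi fun t => inv_pos.2 (v_pos t)
    have hlt : t < Real.log (4 * √2 * (√2 + 1) ^ 2) := by
      rw [← hmono.lt_iff_lt, phi_two]; exact hK2
    have h := hup t _ ht hlt
    rw [phi_two, Real.exp_log (by positivity)] at h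
    have hx : 0 < (phif t - 1) ^ 3 := pow_pos (by linarith) 3
    rw [div_lt_iff₀ hx] at h
    have e : (4 * √2 * (√2 + 1) ^ 2 - (1 + a * (2 - 1) + a * (a - 1) / 2 * (2 - 1) ^ 2)) /
        (2 - 1) ^ 3 = c₁ := by rw [hc₁]; ring
    rw [e] at h
    linarith
end
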